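/- For every finite simple planar graph G and every positive integer h, G has a planar straight-line drawing of height h if and only if G has a flat visibility representation of height h. -/

import Mathlib

open Set

/-- A point in the plane. -/
abbrev Pt : Type := ℝ × ℝ

/-- A point has integer coordinates. -/
def IsIntPt (p : Pt) : Prop := (∃ a : ℤ, p.1 = (a : ℝ)) ∧ (∃ b : ℤ, p.2 = (b : ℝ))

/-- The (closed) segments of a polygonal chain, as pairs of consecutive corners. -/
def chainSegs (l : List Pt) : List (Pt × Pt) := l.zip l.tail

/-- The set of points covered by a polygonal chain. -/
def chainSet (l : List Pt) : Set Pt := ⋃ s ∈ chainSegs l, segment ℝ s.1 s.2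

/-- A polygonal chain is simple (non-self-intersecting): it has at least two
corners, all corners are distinct, and two of its segments meet only if they are
consecutive, and then only in their shared corner. -/
def IsSimpleChain (l : List Pt) : Prop :=
  2 ≤ l.length ∧ l.Nodup ∧
    ∀ i j : ℕ, i < j → ∀ (hi : i < (chainSegs l).length) (hj : j < (chainSegs l).length),
      segment ℝ ((chainSegs l).get ⟨i, hi⟩).1 ((chainSegs l).get ⟨i, hi⟩).2 ∩
        segment ℝ ((chainSegs l).get ⟨j, hj⟩).1 ((chainSegs l).get ⟨j, hj⟩).2 ⊆
        if j = i + 1 then {((chainSegs l).get ⟨j, hj⟩).1} else (∅ : Set Pt)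

/-- Every interior corner of the chain is a genuine bend (a direction change). -/
def GenuineBends (l : List Pt) : Prop :=
  ∀ i : ℕ, ∀ h : i + 2 < l.length,
    ¬ Collinear ℝ ({l.get ⟨i, by omega⟩, l.get ⟨i + 1, by omega⟩, l.get ⟨i + 2, h⟩} : Set Pt)

/-- The chain is a y-monotone path (horizontal segments allowed). -/
def IsMonoChain (l : List Pt) : Prop :=
  (l.map Prod.snd).Chain' (· ≤ ·) ∨ (l.map Prod.snd).Chain' (fun a b => b ≤ a)

/-- All segments of the chain are horizontal or vertical. -/
def IsOrthoChain (l : List Pt) : Prop :=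
  ∀ s ∈ chainSegs l, s.1.1 = s.2.1 ∨ s.1.2 = s.2.2

/-- A poly-line drawing of a graph `G`: every vertex is a point, and every edge
`uv` is the polygonal chain through the list `bends u v` of bend points
(listed in order from `u` to `v`). -/
structure PolylineDrawing {V : Type*} (G : SimpleGraph V) where
  pos : V → Pt
  bends : V → V → List Pt
  bends_symm : ∀ u v, bends v u = (bends u v).reverse

namespace PolylineDrawing

variable {V : Type*} {G : SimpleGraph V}

/-- The corner list of the curve of edge `uv`. -/
def chain (D : PolylineDrawing G) (u v : V) : List Pt :=
  D.pos u :: (D.bends u v ++ [D.pos v])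

/-- The set of points of the curve of edge `uv`. -/
def curve (D : PolylineDrawing G) (u v : V) : Set Pt := chainSet (D.chain u v)

/-- The defining elements of the drawing: vertex points and bends. -/
def points (D : PolylineDrawing G) : Set Pt :=
  Set.range D.pos ∪ ⋃ (u) (v) (_ : G.Adj u v), {p | p ∈ D.bends u v}

/-- The drawing is planar: vertex points are pairwise distinct, every edge curve
is a simple chain whose interior corners are genuine bends, an edge curve contains
no vertex point other than its endpoints, and two distinct edge curves intersect
only in points of common endpoints. -/
def IsPlanar (D : PolylineDrawing G) : Prop :=
  Function.Injective D.pos ∧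
  (∀ u v, G.Adj u v → IsSimpleChain (D.chain u v) ∧ GenuineBends (D.chain u v)) ∧
  (∀ u v w, G.Adj u v → w ≠ u → w ≠ v → D.pos w ∉ D.curve u v) ∧
  (∀ u v x y, G.Adj u v → G.Adj x y → s(u, v) ≠ s(x, y) →
    D.curve u v ∩ D.curve x y ⊆ D.pos '' (({u, v} : Set V) ∩ ({x, y} : Set V)))

/-- All defining elements have integer coordinates. -/
def IntCoords (D : PolylineDrawing G) : Prop := ∀ p ∈ D.points, IsIntPt p

/-- A straight-line drawing: no edge has bends. -/
def IsStraightLine (D : PolylineDrawing G) : Prop := ∀ u v : V, D.bends u v = []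

/-- Every edge curve is a y-monotone path. -/
def IsYMonotone (D : PolylineDrawing G) : Prop :=
  ∀ u v, G.Adj u v → IsMonoChain (D.chain u v)

/-- The drawing fits (after translation) in the rows `1, …, h`. -/
def InHeight (D : PolylineDrawing G) (h : ℕ) : Prop :=
  ∃ y0 : ℤ, ∀ p ∈ D.points, (y0 : ℝ) ≤ p.2 ∧ p.2 ≤ (y0 : ℝ) + (h : ℝ) - 1

/-- The drawing fits (after translation) in the columns `1, …, w`. -/
def InWidth (D : PolylineDrawing G) (w : ℕ) : Prop :=
  ∃ x0 : ℤ, ∀ p ∈ D.points, (x0 : ℝ) ≤ p.1 ∧ p.1 ≤ (x0 : ℝ) + (w : ℝ) - 1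

end PolylineDrawing

/-- An axis-parallel box (possibly degenerated to a segment or a point). -/
structure Box where
  x1 : ℝ
  x2 : ℝ
  y1 : ℝ
  y2 : ℝ
  hx : x1 ≤ x2
  hy : y1 ≤ y2

/-- The set of points of a box. -/
def Box.pts (b : Box) : Set Pt := Set.Icc b.x1 b.x2 ×ˢ Set.Icc b.y1 b.y2

/-- An orthogonal drawing of a graph `G`: every vertex is an axis-aligned box, and
every edge `uv` is an axis-parallel polygonal chain `chain u v` (its first corner is
the attachment point on the box of `u`, its last corner the attachment point on the
box of `v`). -/
structure OrthDrawing {V : Type*} (G : SimpleGraph V) where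
  box : V → Box
  chain : V → V → List Pt
  chain_symm : ∀ u v, chain v u = (chain u v).reverse

namespace OrthDrawing

variable {V : Type*} {G : SimpleGraph V}

/-- The set of points of the curve of edge `uv`. -/
def curve (D : OrthDrawing G) (u v : V) : Set Pt := chainSet (D.chain u v)

/-- The defining elements of the drawing: corners of vertex boxes, and corners
(attachment points and bends) of edge chains. -/
def points (D : OrthDrawing G) : Set Pt :=
  (⋃ v, ({((D.box v).x1, (D.box v).y1), ((D.box v).x1, (D.box v).y2),
          ((D.box v).x2, (D.box v).y1), ((D.box v).x2, (D.box v).y2)} : Set Pt)) ∪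
    ⋃ (u) (v) (_ : G.Adj u v), {p | p ∈ D.chain u v}

/-- All points covered by the drawing (boxes and edge curves). -/
def region (D : OrthDrawing G) : Set Pt :=
  (⋃ v, (D.box v).pts) ∪ ⋃ (u) (v) (_ : G.Adj u v), D.curve u v

/-- The drawing is planar: vertex boxes are pairwise disjoint; every edge curve is a
simple axis-parallel chain, with genuine bends, joining the boxes of its endpoints;
an edge curve meets a vertex box only in its attachment points; and two distinct
edge curves intersect only in common endpoints. -/
def IsPlanar (D : OrthDrawing G) : Prop :=
  (∀ u v : V, u ≠ v → Disjoint (D.box u).pts (D.box v).pts) ∧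
  (∀ u v, G.Adj u v → IsSimpleChain (D.chain u v) ∧ IsOrthoChain (D.chain u v) ∧
      GenuineBends (D.chain u v)) ∧
  (∀ u v, G.Adj u v → ∃ p q l, D.chain u v = p :: (l ++ [q]) ∧
      p ∈ (D.box u).pts ∧ q ∈ (D.box v).pts) ∧
  (∀ u v w, G.Adj u v → D.curve u v ∩ (D.box w).pts ⊆
      {p | (w = u ∧ (D.chain u v).head? = some p) ∨
           (w = v ∧ (D.chain u v).getLast? = some p)}) ∧
  (∀ u v x y, G.Adj u v → G.Adj x y → s(u, v) ≠ s(x, y) →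
      D.curve u v ∩ D.curve x y ⊆
        {p | ((D.chain u v).head? = some p ∨ (D.chain u v).getLast? = some p) ∧
             ((D.chain x y).head? = some p ∨ (D.chain x y).getLast? = some p)})

/-- A flat drawing: every vertex box is degenerated to a horizontal segment. -/
def IsFlat (D : OrthDrawing G) : Prop := ∀ v, (D.box v).y1 = (D.box v).y2

/-- A visibility representation: an orthogonal drawing without bends, i.e. every
edge is a single horizontal or vertical segment. -/
def IsVR (D : OrthDrawing G) : Prop := ∀ u v, G.Adj u v → (D.chain u v).length = 2

/-- Every edge curve is a y-monotone path. -/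
def IsYMonotone (D : OrthDrawing G) : Prop := ∀ u v, G.Adj u v → IsMonoChain (D.chain u v)

/-- All defining elements have integer coordinates. -/
def IntCoords (D : OrthDrawing G) : Prop := ∀ p ∈ D.points, IsIntPt p

/-- The drawing fits (after translation) in the rows `1, …, h`. -/
def InHeight (D : OrthDrawing G) (h : ℕ) : Prop :=
  ∃ y0 : ℤ, ∀ p ∈ D.points, (y0 : ℝ) ≤ p.2 ∧ p.2 ≤ (y0 : ℝ) + (h : ℝ) - 1

/-- The drawing fits (after translation) in the columns `1, …, w`. -/
def InWidth (D : OrthDrawing G) (w : ℕ) : Prop :=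
  ∃ x0 : ℤ, ∀ p ∈ D.points, (x0 : ℝ) ≤ p.1 ∧ p.1 ≤ (x0 : ℝ) + (w : ℝ) - 1

end OrthDrawing

/-- `G` is planar: it admits a (real-coordinate) planar straight-line drawing
(by Fáry's theorem this is equivalent to planarity for finite simple graphs). -/
def HasPlanarEmbedding {V : Type*} (G : SimpleGraph V) : Prop :=
  ∃ pos : V → Pt, Function.Injective pos ∧
    (∀ u v w, G.Adj u v → w ≠ u → w ≠ v → pos w ∉ segment ℝ (pos u) (pos v)) ∧
    ∀ u v x y, G.Adj u v → G.Adj x y → s(u, v) ≠ s(x, y) →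
      segment ℝ (pos u) (pos v) ∩ segment ℝ (pos x) (pos y) ⊆
        pos '' (({u, v} : Set V) ∩ ({x, y} : Set V))

/-!
Points and horizontal bars in the rows `y v`, joined by straight edges, form a planar drawing if and
only if no two objects met by a common horizontal line overlap on it and nothing but its ends lies
on a horizontal edge. So planarity is a matter of the left-to-right order at every height, and one
may replace the abscissae of a drawing by any others that keep this order.

Given a straight-line drawing, being to the left at some common height is an acyclic relation, as a
sweep in the direction of increasing height shows. Numbering vertices and edges along it makes the
edges vertical and stretches each vertex to the bar spanned by its edges.

Conversely, a flat visibility representation asks for abscissae `X v` subject to one strict linear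
inequality for each pair of objects in a row. If there are none, Gordan's theorem gives nonnegative
forces, not all zero, that push the objects in each row apart and are in equilibrium at every
vertex, where each edge is a beam supported at its two ends. As a function of the height, the total
bending moment of the beams left of a vertical cut vanishes outside the rows of the drawing and is
concave wherever the cut misses the vertices. So it is nonnegative, and its zeros spread along the
cut until they meet a vertex. Hence the two edges that bound a maximal run of columns with nonzero
moment at some height share their bottom and their top ends, which is impossible in a simple graph.
So all moments vanish, and with them the forces.
-/

theorem apply_single_nonpos_of_neg_on_orthant {ι : Type*} [DecidableEq ι] {f : (ι → ℝ) →ₗ[ℝ] ℝ}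
    (hf : ∀ z : ι → ℝ, (∀ i, 0 < z i) → f z < 0) (i : ι) : f (Pi.single i 1) ≤ 0 := by
  by_contra! hpos
  have f_one : f 1 < 0 := hf 1 fun _ => one_pos
  have hc : 0 ≤ -f 1 / f (Pi.single i 1) := div_nonneg (by linarith) hpos.le
  have := hf (1 + (-f 1 / f (Pi.single i 1)) • Pi.single i 1) fun j => by
    have : (0 : ι → ℝ) ≤ Pi.single i 1 := Pi.single_nonneg.mpr zero_le_one
    exact add_pos_of_pos_of_nonneg one_pos (mul_nonneg hc (this j))
  rw [map_add, map_smul, smul_eq_mul, div_mul_cancel₀ _ hpos.ne'] at this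
  linarith

theorem exists_linearMap_neg_on_orthant_of_disjoint {ι : Type*} [Finite ι]
    {W : Submodule ℝ (ι → ℝ)} (hdisj : Disjoint (Set.pi univ fun _ => Ioi 0) (W : Set (ι → ℝ))) :
    ∃ f : (ι → ℝ) →ₗ[ℝ] ℝ, (∀ z : ι → ℝ, (∀ i, 0 < z i) → f z < 0) ∧ ∀ z ∈ W, f z = 0 := by
  obtain ⟨f, u, hlt, hle⟩ := geometric_hahn_banach_open (convex_pi fun _ _ => convex_Ioi 0)
    (isOpen_set_pi finite_univ fun _ _ => isOpen_Ioi) W.convex hdisj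
  have u_nonpos : u ≤ 0 := by simpa using hle 0 W.zero_mem
  refine ⟨f, fun z hz => (hlt z fun i _ => hz i).trans_le u_nonpos, fun z hz => ?_⟩
  by_contra! hne : f z ≠ 0
  have := hle (((u - 1) / f z) • z) (W.smul_mem _ hz)
  rw [map_smul, smul_eq_mul, div_mul_cancel₀ _ hne] at this
  linarith

/-- Gordan's theorem of the alternative. -/
theorem exists_forall_pos_or_exists_nonneg_combination_eq_zero {ι E : Type*} [Fintype ι]
    [AddCommGroup E] [Module ℝ E] (L : ι → E →ₗ[ℝ] ℝ) :
    (∃ p, ∀ i, 0 < L i p) ∨ ∃ w : ι → ℝ, 0 ≤ w ∧ w ≠ 0 ∧ ∑ i, w i • L i = 0 := by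
  classical
  by_cases hdisj : Disjoint (Set.pi univ fun _ => Ioi 0)
      (LinearMap.range (LinearMap.pi L) : Set (ι → ℝ))
  swap
  · obtain ⟨_, hpos, p, rfl⟩ := Set.not_disjoint_iff.mp hdisj
    exact Or.inl ⟨p, fun i => hpos i (mem_univ i)⟩
  obtain ⟨f, f_neg, f_range⟩ := exists_linearMap_neg_on_orthant_of_disjoint hdisj
  have f_eq_sum : ∀ z, f z = ∑ i, z i * f (Pi.single i 1) := fun z => by
    conv_lhs => rw [pi_eq_sum_univ' z, map_sum]
    simp only [map_smul, smul_eq_mul]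
  refine Or.inr ⟨fun i => -f (Pi.single i 1), fun i => neg_nonneg.mpr
    (apply_single_nonpos_of_neg_on_orthant f_neg i), fun hw => ?_, ?_⟩
  · have := f_neg 1 fun _ => one_pos
    rw [f_eq_sum, Finset.sum_eq_zero fun i _ => by
      simpa using congrFun hw i] at this
    exact lt_irrefl _ this
  · ext p
    have := f_range _ ⟨p, rfl⟩
    rw [f_eq_sum] at this
    simpa [LinearMap.sum_apply, mul_comm] using this

theorem exists_int_mem_of_isOpen_of_smul_mem {ι : Type*} [Finite ι] {U : Set (ι → ℝ)}
    (hU : IsOpen U) (hne : U.Nonempty) (hsmul : ∀ c : ℝ, 0 < c → ∀ p ∈ U, c • p ∈ U) :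
    ∃ m : ι → ℤ, (fun i => (m i : ℝ)) ∈ U := by
  cases nonempty_fintype ι
  have hdense : DenseRange (fun (q : ι → ℚ) i => (q i : ℝ)) :=
    DenseRange.piMap fun _ => Rat.denseRange_cast
  obtain ⟨q, hq⟩ := hdense.exists_mem_open hU hne
  have hpos : 0 < ∏ i, (q i).den := Finset.prod_pos fun i _ => (q i).den_pos
  have hint : ∀ i, ∃ m : ℤ, (m : ℝ) = (∏ i, (q i).den : ℕ) * (q i : ℝ) := by
    intro i
    obtain ⟨c, hc⟩ : (q i).den ∣ ∏ i, (q i).den := Finset.dvd_prod_of_mem _ (Finset.mem_univ i)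
    have hnum : ((q i).den : ℝ) * (q i : ℝ) = (q i).num := by exact_mod_cast Rat.den_mul_eq_num _
    refine ⟨c * (q i).num, ?_⟩
    rw [hc]
    push_cast
    rw [← hnum]
    ring
  choose m hm using hint
  refine ⟨m, ?_⟩
  rw [funext hm]
  exact hsmul _ (by exact_mod_cast hpos) _ hq

theorem exists_int_lt_of_lt {O T : Type*} [Finite O] [Preorder T] (f : O → T) :
    ∃ g : O → ℤ, ∀ {a b}, f a < f b → g a < g b := by
  classical
  cases nonempty_fintype O
  refine ⟨fun a => (Finset.univ.filter fun b => f b < f a).card, fun {a b} hlt => ?_⟩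
  refine Nat.cast_lt.mpr (Finset.card_lt_card (Finset.ssubset_iff_subset_ne.mpr
    ⟨Finset.monotone_filter_right _ fun c _ hc => hc.trans hlt, fun heq => ?_⟩))
  have : a ∈ Finset.univ.filter fun c => f c < f a := heq ▸ (by simpa using hlt)
  simp at this

theorem exists_int_strictMono_of_trans_below {O T : Type*} [Finite O] [LinearOrder T]
    {R : O → O → Prop} (birth : O → T) (irrefl : ∀ a, ¬R a a)
    (trans : ∀ a b c, birth a ≤ birth b → birth c ≤ birth b → R a b → R b c → R a c) :
    ∃ f : O → ℤ, ∀ a b, R a b → f a < f b := by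
  classical
  cases nonempty_fintype O
  have rat_on_finset : ∀ s : Finset O, ∃ f : O → ℚ, ∀ a ∈ s, ∀ b ∈ s, R a b → f a < f b := by
    intro s
    induction s using Finset.induction_on_max_value birth with
    | empty => exact ⟨fun _ => 0, by simp⟩
    | insert o s ho hmax ih =>
      obtain ⟨f, hf⟩ := ih
      obtain ⟨m, above, below⟩ := Order.exists_between_finsets
        ({a ∈ s | R a o}.image f) ({b ∈ s | R o b}.image f) (by
          simp only [Finset.mem_image, Finset.mem_filter]
          rintro _ ⟨a, ⟨ha, hao⟩, rfl⟩ _ ⟨b, ⟨hb, hob⟩, rfl⟩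
          exact hf a ha b hb (trans a o b (hmax a ha) (hmax b hb) hao hob))
      refine ⟨Function.update f o m, fun a ha b hb hab => ?_⟩
      have mem_of_ne : ∀ c ∈ insert o s, c ≠ o → c ∈ s := fun c hc =>
        Finset.mem_of_mem_insert_of_ne hc
      rcases eq_or_ne a o with rfl | ha'
      · have hb' : b ≠ a := by rintro rfl; exact irrefl b hab
        rw [Function.update_self, Function.update_of_ne hb']
        exact below _ (Finset.mem_image_of_mem f (by simp [mem_of_ne b hb hb', hab]))
      rw [Function.update_of_ne ha']
      rcases eq_or_ne b o with rfl | hb'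
      · rw [Function.update_self]
        exact above _ (Finset.mem_image_of_mem f (by simp [mem_of_ne a ha ha', hab]))
      · rw [Function.update_of_ne hb']
        exact hf a (mem_of_ne a ha ha') b (mem_of_ne b hb hb') hab
  obtain ⟨f, hf⟩ := rat_on_finset Finset.univ
  obtain ⟨g, hg⟩ := exists_int_lt_of_lt f
  exact ⟨g, fun a b hab => hg (hf a (Finset.mem_univ a) b (Finset.mem_univ b) hab)⟩

/-- A sweep by increasing height: an interval that starts after `a` and `c` and separates them at
some height meets them at a common height, so the constraints through it are consistent. -/
theorem exists_int_strictMono_of_weakly_consistent {O T K : Type*} [Finite O] [LinearOrder T]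
    [LinearOrder K] (lo hi : O → T) (key : O → T → K)
    (consistent : ∀ a b, ∀ s ∈ Icc (lo a) (hi a) ∩ Icc (lo b) (hi b),
      ∀ t ∈ Icc (lo a) (hi a) ∩ Icc (lo b) (hi b), key a s < key b s → key a t ≤ key b t) :
    ∃ f : O → ℤ, ∀ a b, ∀ t ∈ Icc (lo a) (hi a) ∩ Icc (lo b) (hi b),
      key a t < key b t → f a < f b := by
  let before : O → O → Prop := fun a b =>
    ∃ t ∈ Icc (lo a) (hi a) ∩ Icc (lo b) (hi b), key a t < key b t
  suffices trans : ∀ a b c, lo a ≤ lo b → lo c ≤ lo b → before a b → before b c → before a c by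
    obtain ⟨f, hf⟩ := exists_int_strictMono_of_trans_below lo (fun a ⟨t, _, ht⟩ => lt_irrefl _ ht)
      trans
    exact ⟨f, fun a b t ht hlt => hf a b ⟨t, ht, hlt⟩⟩
  rintro a b c hab hcb ⟨s, hs, hlts⟩ ⟨t, ht, hltt⟩
  rcases le_total s t with hst | hts
  · have hbs : s ∈ Icc (lo b) (hi b) ∩ Icc (lo c) (hi c) :=
      ⟨hs.2, hcb.trans hs.2.1, hst.trans ht.2.2⟩
    exact ⟨s, ⟨hs.1, hbs.2⟩, hlts.trans_le (consistent b c t ht s hbs hltt)⟩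
  · have hbt : t ∈ Icc (lo a) (hi a) ∩ Icc (lo b) (hi b) :=
      ⟨⟨hab.trans ht.1.1, hts.trans hs.1.2⟩, ht.1⟩
    exact ⟨t, ⟨hbt.1, ht.2⟩, (consistent a b s hs t hbt hlts).trans_lt hltt⟩

theorem chainSet_pair (p q : Pt) : chainSet [p, q] = segment ℝ p q := by
  simp [chainSet, chainSegs]

theorem isSimpleChain_pair {p q : Pt} : IsSimpleChain [p, q] ↔ p ≠ q := by
  constructor
  · rintro ⟨-, hnodup, -⟩
    simpa using hnodup
  · refine fun hne => ⟨le_rfl, by simpa using hne, fun i j hij hi hj => ?_⟩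
    simp only [chainSegs, List.tail_cons, List.zip_cons_cons, List.zip_nil_right,
      List.length_cons, List.length_nil] at hi hj
    omega

theorem genuineBends_pair (p q : Pt) : GenuineBends [p, q] := fun i hi => by
  simp only [List.length_cons, List.length_nil] at hi
  omega

theorem mem_segment_iff_of_snd_lt {p q P : Pt} (hpq : p.2 < q.2) :
    P ∈ segment ℝ p q ↔
      P.2 ∈ Icc p.2 q.2 ∧ P.1 = AffineMap.lineMap p.1 q.1 ((P.2 - p.2) / (q.2 - p.2)) := by
  have hpos : 0 < q.2 - p.2 := sub_pos.mpr hpq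
  rw [segment_eq_image_lineMap]
  constructor
  · rintro ⟨c, ⟨hc0, hc1⟩, rfl⟩
    have hsnd : (AffineMap.lineMap p q c).2 - p.2 = c * (q.2 - p.2) := by
      simp [AffineMap.lineMap_apply]
    refine ⟨⟨by nlinarith, by nlinarith⟩, ?_⟩
    rw [hsnd, mul_div_cancel_right₀ _ hpos.ne']
    simp [AffineMap.lineMap_apply]
  · rintro ⟨⟨h0, h1⟩, hfst⟩
    refine ⟨(P.2 - p.2) / (q.2 - p.2), ⟨div_nonneg (by linarith) hpos.le,
      (div_le_one hpos).mpr (by linarith)⟩, Prod.ext ?_ ?_⟩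
    · simp [hfst, AffineMap.lineMap_apply]
    · simp [AffineMap.lineMap_apply, div_mul_cancel₀ _ hpos.ne']

theorem mem_segment_iff_of_snd_eq {p q P : Pt} (hsnd : p.2 = q.2) (hfst : p.1 ≤ q.1) :
    P ∈ segment ℝ p q ↔ P.2 = p.2 ∧ P.1 ∈ Icc p.1 q.1 := by
  obtain ⟨a, b⟩ := p
  obtain ⟨c, d⟩ := q
  obtain rfl : b = d := hsnd
  rw [← Prod.image_mk_segment_left, segment_eq_Icc hfst]
  constructor
  · rintro ⟨x, hx, rfl⟩
    exact ⟨rfl, hx⟩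
  · rintro ⟨hy, hx⟩
    exact ⟨P.1, hx, Prod.ext rfl hy.symm⟩

/-- An edge of `G` between different rows, oriented upwards; `y v` is the row of the vertex `v`. -/
@[ext] structure UpEdge {V : Type*} (G : SimpleGraph V) (y : V → ℤ) where
  bot : V
  top : V
  adj : G.Adj bot top
  lt : y bot < y top

/-- What a horizontal line can meet outside the horizontal edges: vertices, and edges between
different rows. -/
inductive Obj {V : Type*} (G : SimpleGraph V) (y : V → ℤ)
  | vertex (v : V)
  | edge (e : UpEdge G y)

namespace UpEdge

variable {V : Type*} {G : SimpleGraph V} {y : V → ℤ}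

instance [Finite V] : Finite (UpEdge G y) :=
  Finite.of_injective (fun e => (e.bot, e.top)) fun _ _ h => UpEdge.ext_iff.mpr (Prod.mk.inj h)

theorem exists_sym2_eq {u v : V} (huv : G.Adj u v) (hy : y u ≠ y v) :
    ∃ e : UpEdge G y, s(e.bot, e.top) = s(u, v) := by
  rcases hy.lt_or_gt with h | h
  · exact ⟨⟨u, v, huv, h⟩, rfl⟩
  · exact ⟨⟨v, u, huv.symm, h⟩, Sym2.eq_swap⟩

theorem eq_of_sym2_eq {e f : UpEdge G y} (h : s(e.bot, e.top) = s(f.bot, f.top)) : e = f := by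
  rcases Sym2.eq_iff.mp h with ⟨hbot, htop⟩ | ⟨hbot, htop⟩
  · exact UpEdge.ext hbot htop
  · have := e.lt
    have := f.lt
    rw [hbot, htop] at *
    omega

/-- The abscissa at height `t` of the line that joins abscissa `p` in the bottom row of `e` to
abscissa `q` in its top row. -/
noncomputable def lineAt (e : UpEdge G y) (p q t : ℝ) : ℝ :=
  AffineMap.lineMap p q ((t - y e.bot) / (y e.top - y e.bot))

theorem cast_lt (e : UpEdge G y) : (y e.bot : ℝ) < y e.top := Int.cast_lt.mpr e.lt

theorem lineAt_bot (e : UpEdge G y) (p q : ℝ) : e.lineAt p q (y e.bot) = p := by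
  simp [lineAt]

theorem lineAt_top (e : UpEdge G y) (p q : ℝ) : e.lineAt p q (y e.top) = q := by
  simp [lineAt, div_self (sub_pos.mpr e.cast_lt).ne']

theorem lineAt_self (e : UpEdge G y) (p t : ℝ) : e.lineAt p p t = p := by
  simp [lineAt]

theorem lineAt_affine (e : UpEdge G y) (p q a b t : ℝ) :
    e.lineAt p q t * (b - a) = e.lineAt p q a * (b - t) + e.lineAt p q b * (t - a) := by
  simp only [lineAt, AffineMap.lineMap_apply, vsub_eq_sub, vadd_eq_add, smul_eq_mul, div_eq_mul_inv]
  ring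

theorem continuous_lineAt (e : UpEdge G y) (p q : ℝ) : Continuous (e.lineAt p q) := by
  unfold lineAt
  fun_prop

end UpEdge

namespace Obj

variable {V : Type*} {G : SimpleGraph V} {y : V → ℤ}

instance [Finite V] : Finite (Obj G y) :=
  Finite.of_injective (β := V ⊕ UpEdge G y)
    (fun | vertex v => Sum.inl v | edge e => Sum.inr e) fun o o' => by
      cases o <;> cases o' <;> simp

/-- The object is met by the horizontal line at height `t`; an edge is met only strictly between
the rows of its ends. -/
def Active (t : ℝ) : Obj G y → Prop
  | vertex v => (y v : ℝ) = t
  | edge e => y e.bot < t ∧ t < y e.top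

/-- The lower end of an edge; a vertex is its own lower end. -/
def bot : Obj G y → V
  | vertex v => v
  | edge e => e.bot

/-- The upper end of an edge; a vertex is its own upper end. -/
def top : Obj G y → V
  | vertex v => v
  | edge e => e.top

theorem Active.mem_Icc {t : ℝ} {o : Obj G y} (ho : o.Active t) :
    t ∈ Icc (y o.bot : ℝ) (y o.top) := by
  cases o with
  | vertex v => exact ⟨le_of_eq ho, ge_of_eq ho⟩
  | edge e => exact ⟨ho.1.le, ho.2.le⟩

theorem bot_le_top (o : Obj G y) : (y o.bot : ℝ) ≤ y o.top := by
  cases o with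
  | vertex v => exact le_rfl
  | edge e => exact e.cast_lt.le

end Obj

/-- Horizontal bars `[left v, right v]` in the rows `y v`, and straight edges that leave the bar of
`u` towards `v` at abscissa `att u v`. A straight-line drawing has degenerate bars, a flat
visibility representation has vertical edges. -/
structure BarDrawing {V : Type*} (G : SimpleGraph V) (y : V → ℤ) where
  left : V → ℝ
  right : V → ℝ
  att : V → V → ℝ
  left_le_right : ∀ v, left v ≤ right v
  att_mem : ∀ {u v}, G.Adj u v → att u v ∈ Icc (left u) (right u)

namespace BarDrawing

variable {V : Type*} {G : SimpleGraph V} {y : V → ℤ} (D : BarDrawing G y)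

/-- The points of the bar of `v`. -/
def bar (v : V) : Set Pt := Icc (D.left v) (D.right v) ×ˢ {(y v : ℝ)}

/-- The end of the edge `uv` on the bar of `u`. -/
def port (u v : V) : Pt := (D.att u v, y u)

/-- The points of the edge `uv`. -/
def curve (u v : V) : Set Pt := segment ℝ (D.port u v) (D.port v u)

/-- The abscissa of the edge `e` at height `t`. -/
noncomputable def edgeX (e : UpEdge G y) (t : ℝ) : ℝ :=
  e.lineAt (D.att e.bot e.top) (D.att e.top e.bot) t

/-- The left end of what the line at height `t` sees of an active object. -/
noncomputable def lo (t : ℝ) : Obj G y → ℝ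
  | .vertex v => D.left v
  | .edge e => D.edgeX e t

/-- The right end of what the line at height `t` sees of an active object. -/
noncomputable def hi (t : ℝ) : Obj G y → ℝ
  | .vertex v => D.right v
  | .edge e => D.edgeX e t

/-- Planarity of a bar drawing, in terms of the point sets of bars and edges. -/
structure IsPlanar : Prop where
  disjoint_bar : ∀ {u v}, u ≠ v → Disjoint (D.bar u) (D.bar v)
  curve_inter_bar : ∀ {u v w P}, G.Adj u v → P ∈ D.curve u v → P ∈ D.bar w →
    w = u ∧ P = D.port u v ∨ w = v ∧ P = D.port v u
  curve_inter_curve : ∀ {u v a b P}, G.Adj u v → G.Adj a b → s(u, v) ≠ s(a, b) →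
    P ∈ D.curve u v → P ∈ D.curve a b → P = D.port u v ∨ P = D.port v u

/-- Planarity of a bar drawing, in terms of the left-to-right order at every height. -/
structure RowOrdered : Prop where
  tight : ∀ {u v}, G.Adj u v → y u = y v → D.right u < D.left v →
    D.att u v = D.right u ∧ D.att v u = D.left v
  separated : ∀ {t o o'}, o ≠ o' → o.Active t → o'.Active t →
    D.hi t o < D.lo t o' ∨ D.hi t o' < D.lo t o
  clear : ∀ {u v o}, G.Adj u v → y u = y v → o.Active (y u) →
    D.right u < D.lo (y u) o → D.left v ≤ D.hi (y u) o

variable {D}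

theorem lo_le_hi (t : ℝ) (o : Obj G y) : D.lo t o ≤ D.hi t o := by
  cases o
  · exact D.left_le_right _
  · exact le_rfl

/-- Only `tight` can fail when the bars are moved but their order is kept. -/
theorem RowOrdered.of_order_preserving {D' : BarDrawing G y} (hD : D.RowOrdered)
    (tight : ∀ {u v}, G.Adj u v → y u = y v → D'.right u < D'.left v →
      D'.att u v = D'.right u ∧ D'.att v u = D'.left v)
    (order : ∀ {t o o'}, o.Active t → o'.Active t → D.hi t o < D.lo t o' →
      D'.hi t o < D'.lo t o') : D'.RowOrdered where
  tight := tight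
  separated hne ho ho' := (hD.separated hne ho ho').imp (order ho ho') (order ho' ho)
  clear {u v o} huv hy ho hlt := by
    by_contra! hlt'
    have hu : (Obj.vertex u : Obj G y).Active (y u) := rfl
    have hv : (Obj.vertex v : Obj G y).Active (y u) := by simp [Obj.Active, hy]
    have reflects : ∀ {o o' : Obj G y}, o.Active (y u) → o'.Active (y u) →
        D'.hi (y u) o < D'.lo (y u) o' → D.hi (y u) o < D.lo (y u) o' := by
      intro o o' ho ho' h
      have hne : o ≠ o' := by
        rintro rfl
        exact (lo_le_hi _ o).not_gt h
      refine (hD.separated hne ho ho').resolve_right fun h' => ?_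
      have := order ho' ho h'
      linarith [D'.lo_le_hi (y u) o, D'.lo_le_hi (y u) o']
    exact (hD.clear huv hy ho (reflects hu ho hlt)).not_gt (reflects ho hv hlt')

theorem port_mem_bar {u v : V} (huv : G.Adj u v) : D.port u v ∈ D.bar u :=
  ⟨D.att_mem huv, rfl⟩

theorem curve_comm (u v : V) : D.curve v u = D.curve u v := segment_symm ..

theorem mem_curve_upEdge_iff {e : UpEdge G y} {P : Pt} :
    P ∈ D.curve e.bot e.top ↔ P.2 ∈ Icc (y e.bot : ℝ) (y e.top) ∧ P.1 = D.edgeX e P.2 :=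
  mem_segment_iff_of_snd_lt e.cast_lt

theorem mem_curve_horizontal_iff {u v : V} {P : Pt} (hy : y u = y v)
    (hle : D.att u v ≤ D.att v u) :
    P ∈ D.curve u v ↔ P.2 = y u ∧ P.1 ∈ Icc (D.att u v) (D.att v u) :=
  mem_segment_iff_of_snd_eq (by simp [port, hy]) hle

theorem edgeX_mem_curve {e : UpEdge G y} {t : ℝ} (ht : (Obj.edge e).Active t) :
    (D.edgeX e t, t) ∈ D.curve e.bot e.top :=
  mem_curve_upEdge_iff.mpr ⟨⟨ht.1.le, ht.2.le⟩, rfl⟩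

namespace IsPlanar

theorem tight (hD : D.IsPlanar) {u v : V} (huv : G.Adj u v) (hy : y u = y v)
    (hlt : D.right u < D.left v) : D.att u v = D.right u ∧ D.att v u = D.left v := by
  have hu := D.att_mem huv
  have hv := D.att_mem huv.symm
  have hle : D.att u v ≤ D.att v u := hu.2.trans (hlt.le.trans hv.1)
  have mem_curve : ∀ x ∈ Icc (D.right u) (D.left v), ((x, (y u : ℝ)) : Pt) ∈ D.curve u v :=
    fun x hx => (mem_curve_horizontal_iff hy hle).mpr ⟨rfl, hu.2.trans hx.1, hx.2.trans hv.1⟩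
  constructor
  · obtain ⟨-, h⟩ | ⟨h, -⟩ := hD.curve_inter_bar huv (mem_curve _ ⟨le_rfl, hlt.le⟩)
      (show _ ∈ D.bar u from ⟨⟨D.left_le_right u, le_rfl⟩, rfl⟩)
    · exact (congrArg Prod.fst h).symm
    · exact absurd h huv.ne
  · obtain ⟨h, -⟩ | ⟨-, h⟩ := hD.curve_inter_bar huv (mem_curve _ ⟨hlt.le, le_rfl⟩)
      (show _ ∈ D.bar v from ⟨⟨le_rfl, D.left_le_right v⟩, by simp [hy]⟩)
    · exact absurd h huv.ne'
    · exact (congrArg Prod.fst h).symm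

theorem edgeX_notMem_bar (hD : D.IsPlanar) {e : UpEdge G y} {t : ℝ} (ht : (Obj.edge e).Active t)
    (w : V) : (D.edgeX e t, t) ∉ D.bar w := by
  intro hw
  obtain ⟨-, h⟩ | ⟨-, h⟩ := hD.curve_inter_bar e.adj (edgeX_mem_curve ht) hw
  · exact ht.1.ne' (congrArg Prod.snd h)
  · exact ht.2.ne (congrArg Prod.snd h)

theorem edgeX_notMem_curve (hD : D.IsPlanar) {e : UpEdge G y} {t : ℝ}
    (ht : (Obj.edge e).Active t) {u v : V} (huv : G.Adj u v) (hne : s(e.bot, e.top) ≠ s(u, v)) :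
    (D.edgeX e t, t) ∉ D.curve u v := by
  intro hmem
  obtain h | h := hD.curve_inter_curve e.adj huv hne (edgeX_mem_curve ht) hmem
  · exact ht.1.ne' (congrArg Prod.snd h)
  · exact ht.2.ne (congrArg Prod.snd h)

theorem vertex_edge_separated (hD : D.IsPlanar) {w : V} {e : UpEdge G y}
    (he : (Obj.edge e).Active (y w)) :
    D.right w < D.edgeX e (y w) ∨ D.edgeX e (y w) < D.left w := by
  by_contra! h
  exact hD.edgeX_notMem_bar he w ⟨⟨h.2, h.1⟩, rfl⟩

theorem separated (hD : D.IsPlanar) {t : ℝ} {o o' : Obj G y} (hne : o ≠ o') (ho : o.Active t)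
    (ho' : o'.Active t) : D.hi t o < D.lo t o' ∨ D.hi t o' < D.lo t o := by
  cases o with
  | vertex v =>
    obtain rfl : (y v : ℝ) = t := ho
    cases o' with
    | vertex w =>
      by_contra! h
      have hvw : v ≠ w := fun h => hne (congrArg _ h)
      have mem_v : (max (D.left v) (D.left w), (y v : ℝ)) ∈ D.bar v :=
        ⟨⟨le_max_left _ _, max_le (D.left_le_right v) h.1⟩, rfl⟩
      have mem_w : (max (D.left v) (D.left w), (y v : ℝ)) ∈ D.bar w :=
        ⟨⟨le_max_right _ _, max_le h.2 (D.left_le_right w)⟩, ho'.symm⟩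
      exact Set.disjoint_left.mp (hD.disjoint_bar hvw) mem_v mem_w
    | edge e => exact hD.vertex_edge_separated ho'
  | edge e =>
    cases o' with
    | vertex w =>
      obtain rfl : (y w : ℝ) = t := ho'
      exact (hD.vertex_edge_separated ho).symm
    | edge f =>
      refine lt_or_gt_of_ne fun h : D.edgeX e t = D.edgeX f t => ?_
      refine hD.edgeX_notMem_curve ho f.adj (fun h => hne ?_) (h ▸ edgeX_mem_curve ho')
      rw [UpEdge.eq_of_sym2_eq h]

theorem clear (hD : D.IsPlanar) {u v : V} {o : Obj G y} (huv : G.Adj u v) (hy : y u = y v)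
    (ho : o.Active (y u)) (hlt : D.right u < D.lo (y u) o) : D.left v ≤ D.hi (y u) o := by
  by_contra! hlt'
  have hu := D.att_mem huv
  have hv := D.att_mem huv.symm
  have hle := lo_le_hi (D := D) (y u) o
  have mem_curve : ((D.lo (y u) o, (y u : ℝ)) : Pt) ∈ D.curve u v :=
    (mem_curve_horizontal_iff hy (by linarith [hu.2, hv.1])).mpr
      ⟨rfl, by linarith [hu.2], by linarith [hv.1]⟩
  cases o with
  | vertex w =>
    obtain ⟨rfl, -⟩ | ⟨rfl, -⟩ := hD.curve_inter_bar (w := w) huv mem_curve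
      ⟨⟨le_rfl, D.left_le_right w⟩, (Eq.symm ho :)⟩
    · exact (D.left_le_right w).not_gt hlt
    · exact (D.left_le_right w).not_gt hlt'
  | edge e =>
    refine hD.edgeX_notMem_curve ho huv (fun h => ?_) mem_curve
    have := e.lt
    rcases Sym2.eq_iff.mp h with ⟨rfl, rfl⟩ | ⟨rfl, rfl⟩ <;> omega

theorem rowOrdered (hD : D.IsPlanar) : D.RowOrdered where
  tight := hD.tight
  separated := hD.separated
  clear := hD.clear

end IsPlanar

variable (D) in
/-- `P` lies on the edge `z`, away from the bars of its ends if `D` is row ordered. -/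
def Inner (z : Sym2 V) (P : Pt) : Prop :=
  (∃ e : UpEdge G y, s(e.bot, e.top) = z ∧ (Obj.edge e).Active P.2 ∧ P.1 = D.edgeX e P.2) ∨
    ∃ u v, s(u, v) = z ∧ G.Adj u v ∧ y u = y v ∧ P.2 = y u ∧ D.right u < P.1 ∧ P.1 < D.left v

namespace RowOrdered

theorem right_lt_left_or (hD : D.RowOrdered) {u v : V} (hne : u ≠ v) (hy : y u = y v) :
    D.right u < D.left v ∨ D.right v < D.left u :=
  hD.separated (t := y u) (o := .vertex u) (o' := .vertex v) (by simpa using hne) rfl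
    (by simp [Obj.Active, hy])

theorem disjoint_bar (hD : D.RowOrdered) {u v : V} (hne : u ≠ v) :
    Disjoint (D.bar u) (D.bar v) := by
  refine Set.disjoint_left.mpr fun P hu hv => ?_
  have hy : (y u : ℝ) = y v := (show P.2 = _ from hu.2).symm.trans hv.2
  rcases hD.right_lt_left_or hne (Int.cast_injective hy) with h | h
  · linarith [hu.1.2, hv.1.1]
  · linarith [hv.1.2, hu.1.1]

theorem eq_of_mem_bar (hD : D.RowOrdered) {u v : V} {P : Pt} (hu : P ∈ D.bar u)
    (hv : P ∈ D.bar v) : u = v := by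
  by_contra hne
  exact Set.disjoint_left.mp (hD.disjoint_bar hne) hu hv

theorem eq_port_or_inner_of_horizontal (hD : D.RowOrdered) {u v : V} {P : Pt} (huv : G.Adj u v)
    (hy : y u = y v) (hlt : D.right u < D.left v) (hP : P ∈ D.curve u v) :
    P = D.port u v ∨ P = D.port v u ∨ D.Inner s(u, v) P := by
  obtain ⟨hu, hv⟩ := hD.tight huv hy hlt
  obtain ⟨hsnd, hfst⟩ := (mem_curve_horizontal_iff hy (by rw [hu, hv]; exact hlt.le)).mp hP
  rcases hfst.1.eq_or_lt with h | hleft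
  · exact Or.inl (Prod.ext h.symm hsnd)
  rcases hfst.2.eq_or_lt with h | hright
  · exact Or.inr (Or.inl (Prod.ext h (by simp [port, hsnd, hy])))
  · exact Or.inr (Or.inr (Or.inr ⟨u, v, rfl, huv, hy, hsnd, hu ▸ hleft, hv ▸ hright⟩))

theorem eq_port_or_inner_of_upEdge {e : UpEdge G y} {P : Pt}
    (hP : P ∈ D.curve e.bot e.top) :
    P = D.port e.bot e.top ∨ P = D.port e.top e.bot ∨ D.Inner s(e.bot, e.top) P := by
  obtain ⟨⟨hbot, htop⟩, hfst⟩ := mem_curve_upEdge_iff.mp hP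
  rcases hbot.eq_or_lt with h | hbot
  · exact Or.inl (Prod.ext (by rw [hfst, ← h]; exact e.lineAt_bot _ _) h.symm)
  rcases htop.eq_or_lt with h | htop
  · exact Or.inr (Or.inl (Prod.ext (by rw [hfst, h]; exact e.lineAt_top _ _) h))
  · exact Or.inr (Or.inr (Or.inl ⟨e, rfl, ⟨hbot, htop⟩, hfst⟩))

theorem eq_port_or_inner (hD : D.RowOrdered) {u v : V} {P : Pt} (huv : G.Adj u v)
    (hP : P ∈ D.curve u v) : P = D.port u v ∨ P = D.port v u ∨ D.Inner s(u, v) P := by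
  by_cases hy : y u = y v
  · rcases hD.right_lt_left_or huv.ne hy with hlt | hlt
    · exact hD.eq_port_or_inner_of_horizontal huv hy hlt hP
    · rw [Sym2.eq_swap, or_left_comm]
      exact hD.eq_port_or_inner_of_horizontal huv.symm hy.symm hlt (curve_comm u v ▸ hP)
  · obtain ⟨e, he⟩ := UpEdge.exists_sym2_eq huv hy
    rcases Sym2.eq_iff.mp he with ⟨rfl, rfl⟩ | ⟨rfl, rfl⟩
    · exact eq_port_or_inner_of_upEdge hP
    · rw [Sym2.eq_swap, or_left_comm]
      exact eq_port_or_inner_of_upEdge (curve_comm e.top e.bot ▸ hP)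

theorem notMem_bar_of_inner (hD : D.RowOrdered) {z : Sym2 V} {P : Pt} (hP : D.Inner z P) (w : V) :
    P ∉ D.bar w := by
  intro hw
  have hrow : (Obj.vertex w : Obj G y).Active P.2 := hw.2.symm
  rcases hP with ⟨e, -, he, hfst⟩ | ⟨u, v, -, huv, hy, hsnd, hu, hv⟩
  · rcases hD.separated (o := .edge e) (o' := .vertex w) (by simp) he hrow with h | h
    · exact (h.trans_le hw.1.1).ne' hfst
    · exact (hw.1.2.trans_lt h).ne hfst
  · have hwu : y w = y u := Int.cast_injective (hrow.trans hsnd)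
    have huw : u ≠ w := by rintro rfl; exact hu.not_ge hw.1.2
    have hvw : v ≠ w := by rintro rfl; exact hv.not_ge hw.1.1
    have hright : D.right u < D.left w :=
      (hD.right_lt_left_or huw hwu.symm).resolve_right fun h => by
        linarith [hw.1.2, D.left_le_right u]
    have hleft := hD.clear huv hy (o := .vertex w) (by simp [Obj.Active, hwu]) hright
    rcases hD.right_lt_left_or hvw (hy.symm.trans hwu.symm) with h | h
    · linarith [hw.1.1, D.left_le_right v]
    · exact hleft.not_gt h

theorem edge_not_between (hD : D.RowOrdered) {u v : V} {e : UpEdge G y} {P : Pt} (huv : G.Adj u v)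
    (hy : y u = y v) (hsnd : P.2 = y u) (hu : D.right u < P.1) (hv : P.1 < D.left v)
    (he : (Obj.edge e).Active P.2) : P.1 ≠ D.edgeX e P.2 := by
  intro hfst
  rw [hsnd] at he hfst
  exact (hD.clear huv hy he (hu.trans_eq hfst)).not_gt (hfst.symm.trans_lt hv)

theorem eq_of_horizontal_overlap (hD : D.RowOrdered) {u v a b : V} {x : ℝ} (huv : G.Adj u v)
    (hab : G.Adj a b) (hyuv : y u = y v) (hyab : y a = y b) (hya : y a = y u)
    (hu : D.right u < x) (hv : x < D.left v) (ha : D.right a < x) (hb : x < D.left b) :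
    u = a ∧ v = b := by
  have not_vertex_between : ∀ {u v w}, G.Adj u v → y u = y v → y w = y u →
      D.right u < D.left w → D.left v ≤ D.right w := fun huv hy hw =>
    hD.clear (o := .vertex _) huv hy (by simp [Obj.Active, hw])
  constructor <;> by_contra hne
  · rcases hD.right_lt_left_or hne hya.symm with h | h
    · linarith [not_vertex_between huv hyuv hya h]
    · linarith [not_vertex_between hab hyab hya.symm h]
  · rcases hD.right_lt_left_or hne (by omega) with h | h
    · linarith [not_vertex_between hab hyab (w := v) (by omega) (by linarith [D.left_le_right v])]
    · linarith [not_vertex_between huv hyuv (w := b) (by omega) (by linarith [D.left_le_right b])]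

theorem eq_of_inner_of_inner (hD : D.RowOrdered) {z z' : Sym2 V} {P : Pt} (hP : D.Inner z P)
    (hP' : D.Inner z' P) : z = z' := by
  rcases hP with ⟨e, rfl, he, hfst⟩ | ⟨u, v, rfl, huv, hy, hsnd, hu, hv⟩ <;>
    rcases hP' with ⟨f, rfl, hf, hfst'⟩ | ⟨a, b, rfl, hab, hy', hsnd', ha, hb⟩
  · suffices e = f by rw [this]
    by_contra hne
    have := hD.separated (o := .edge e) (o' := .edge f) (by simpa using hne) he hf
    simp only [hi, lo, ← hfst, ← hfst', lt_self_iff_false, or_self] at this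
  · exact absurd hfst (hD.edge_not_between hab hy' hsnd' ha hb he)
  · exact absurd hfst' (hD.edge_not_between huv hy hsnd hu hv hf)
  · have hya : y a = y u := Int.cast_injective (hsnd'.symm.trans hsnd)
    obtain ⟨rfl, rfl⟩ := hD.eq_of_horizontal_overlap huv hab hy hy' hya hu hv ha hb
    rfl

theorem isPlanar (hD : D.RowOrdered) : D.IsPlanar where
  disjoint_bar := hD.disjoint_bar
  curve_inter_bar huv hP hw := by
    rcases hD.eq_port_or_inner huv hP with rfl | rfl | hP
    · exact Or.inl ⟨hD.eq_of_mem_bar hw (port_mem_bar huv), rfl⟩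
    · exact Or.inr ⟨hD.eq_of_mem_bar hw (port_mem_bar huv.symm), rfl⟩
    · exact absurd hw (hD.notMem_bar_of_inner hP _)
  curve_inter_curve huv hab hne hP hP' := by
    rcases hD.eq_port_or_inner huv hP with hP | hP | hP
    · exact Or.inl hP
    · exact Or.inr hP
    rcases hD.eq_port_or_inner hab hP' with rfl | rfl | hP'
    · exact absurd (port_mem_bar hab) (hD.notMem_bar_of_inner hP _)
    · exact absurd (port_mem_bar hab.symm) (hD.notMem_bar_of_inner hP _)
    · exact absurd (hD.eq_of_inner_of_inner hP hP') hne

end RowOrdered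

theorem isPlanar_iff_rowOrdered : D.IsPlanar ↔ D.RowOrdered :=
  ⟨IsPlanar.rowOrdered, RowOrdered.isPlanar⟩

end BarDrawing

/-- The rows `y v` lie, after a translation, among the rows `1, …, h`. -/
def RowsWithin {V : Type*} (y : V → ℤ) (h : ℕ) : Prop :=
  ∃ y0 : ℤ, ∀ v, y0 ≤ y v ∧ y v ≤ y0 + h - 1

theorem rowsWithin_iff_cast {V : Type*} {y : V → ℤ} {h : ℕ} :
    RowsWithin y h ↔ ∃ y0 : ℤ, ∀ v, (y0 : ℝ) ≤ y v ∧ (y v : ℝ) ≤ (y0 : ℝ) + (h : ℝ) - 1 := by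
  refine exists_congr fun y0 => forall_congr' fun v => and_congr Int.cast_le.symm ?_
  rw [← Int.cast_le (R := ℝ)]
  push_cast
  rfl

/-- The straight-line drawing with the vertex `v` at `(X v, y v)`, as a bar drawing. -/
def BarDrawing.ofPoints {V : Type*} (G : SimpleGraph V) (y : V → ℤ) (X : V → ℝ) :
    BarDrawing G y where
  left := X
  right := X
  att u _ := X u
  left_le_right _ := le_rfl
  att_mem _ := ⟨le_rfl, le_rfl⟩

theorem BarDrawing.bar_ofPoints {V : Type*} {G : SimpleGraph V} {y : V → ℤ} {X : V → ℝ} (v : V) :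
    (BarDrawing.ofPoints G y X).bar v = {(X v, (y v : ℝ))} := by
  rw [← Set.singleton_prod_singleton, ← Set.Icc_self]
  rfl

/-- The integer data of a flat visibility representation with the vertex `v` in row `y v`. -/
structure FlatVR {V : Type*} (G : SimpleGraph V) (y : V → ℤ) where
  left : V → ℤ
  right : V → ℤ
  att : V → V → ℤ
  left_le_right : ∀ v, left v ≤ right v
  att_mem : ∀ {u v}, G.Adj u v → att u v ∈ Icc (left u) (right u)
  vertical : ∀ {u v}, G.Adj u v → y u ≠ y v → att u v = att v u

/-- A flat visibility representation as a bar drawing with real coordinates. -/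
@[simps] def FlatVR.toBarDrawing {V : Type*} {G : SimpleGraph V} {y : V → ℤ} (F : FlatVR G y) :
    BarDrawing G y where
  left v := F.left v
  right v := F.right v
  att u v := F.att u v
  left_le_right v := Int.cast_le.mpr (F.left_le_right v)
  att_mem huv := ⟨Int.cast_le.mpr (F.att_mem huv).1, Int.cast_le.mpr (F.att_mem huv).2⟩

namespace PolylineDrawing

variable {V : Type*} {G : SimpleGraph V} {y : V → ℤ} {X : V → ℝ} {D : PolylineDrawing G}

theorem IsStraightLine.curve_eq (hD : D.IsStraightLine) (u v : V) :
    D.curve u v = segment ℝ (D.pos u) (D.pos v) := by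
  rw [curve, chain, hD, List.nil_append, chainSet_pair]

theorem IsStraightLine.points_eq (hD : D.IsStraightLine) : D.points = Set.range D.pos := by
  simp [points, hD _ _]

theorem IsStraightLine.curve_eq_ofPoints (hD : D.IsStraightLine)
    (hpos : ∀ v, D.pos v = (X v, (y v : ℝ))) (u v : V) :
    D.curve u v = (BarDrawing.ofPoints G y X).curve u v := by
  rw [hD.curve_eq, hpos, hpos]
  rfl

theorem IsStraightLine.ofPoints_isPlanar (hD : D.IsStraightLine)
    (hpos : ∀ v, D.pos v = (X v, (y v : ℝ))) (hplanar : D.IsPlanar) :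
    (BarDrawing.ofPoints G y X).IsPlanar := by
  obtain ⟨hinj, -, hvertex, hedge⟩ := hplanar
  refine ⟨fun {u v} hne => ?_, fun {u v w P} huv hP hw => ?_,
    fun {u v a b P} huv hab hne hP hP' => ?_⟩
  · simpa only [BarDrawing.bar_ofPoints, Set.disjoint_singleton, ← hpos] using hinj.ne hne
  · rw [← hD.curve_eq_ofPoints hpos] at hP
    rw [BarDrawing.bar_ofPoints, Set.mem_singleton_iff] at hw
    by_contra! h
    exact hvertex u v w huv (fun hu => h.1 hu (hu ▸ hw)) (fun hv => h.2 hv (hv ▸ hw))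
      (by rwa [hpos, ← hw])
  · rw [← hD.curve_eq_ofPoints hpos] at hP hP'
    obtain ⟨c, ⟨rfl | rfl, -⟩, rfl⟩ := hedge u v a b huv hab hne ⟨hP, hP'⟩
    · exact Or.inl (hpos _)
    · exact Or.inr (hpos _)

theorem IsStraightLine.isPlanar_of_ofPoints (hD : D.IsStraightLine)
    (hpos : ∀ v, D.pos v = (X v, (y v : ℝ))) (hplanar : (BarDrawing.ofPoints G y X).IsPlanar) :
    D.IsPlanar := by
  have port_eq : ∀ u v, (BarDrawing.ofPoints G y X).port u v = D.pos u := fun u _ => (hpos u).symm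
  have bar_eq : ∀ v, (BarDrawing.ofPoints G y X).bar v = {D.pos v} := fun v => by
    rw [BarDrawing.bar_ofPoints, hpos]
  obtain ⟨hdisj, hvertex, hedge⟩ := hplanar
  have hinj : Function.Injective D.pos := fun u v h => by
    by_contra hne
    simpa [bar_eq, h] using hdisj hne
  refine ⟨hinj, fun u v huv => ?_, fun u v w huv hu hv hw => ?_, fun u v a b huv hab hne => ?_⟩
  · rw [chain, hD, List.nil_append]
    exact ⟨isSimpleChain_pair.mpr (hinj.ne huv.ne), genuineBends_pair _ _⟩
  · rw [hD.curve_eq_ofPoints hpos] at hw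
    rcases hvertex huv hw (by rw [bar_eq]; rfl) with ⟨h, -⟩ | ⟨h, -⟩
    · exact hu h
    · exact hv h
  · rintro P ⟨hP, hP'⟩
    rw [hD.curve_eq_ofPoints hpos] at hP hP'
    have huv' := hedge huv hab hne hP hP'
    have hab' := hedge hab huv hne.symm hP' hP
    simp only [port_eq] at huv' hab'
    rcases huv' with rfl | rfl <;> rcases hab' with h | h <;>
      exact ⟨_, ⟨by simp, by simp [hinj h]⟩, rfl⟩

theorem IsStraightLine.isPlanar_iff (hD : D.IsStraightLine)
    (hpos : ∀ v, D.pos v = (X v, (y v : ℝ))) :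
    D.IsPlanar ↔ (BarDrawing.ofPoints G y X).IsPlanar :=
  ⟨hD.ofPoints_isPlanar hpos, hD.isPlanar_of_ofPoints hpos⟩

end PolylineDrawing

theorem exists_straightLine_iff {V : Type*} {G : SimpleGraph V} {h : ℕ} :
    (∃ D : PolylineDrawing G, D.IsStraightLine ∧ D.IsPlanar ∧ D.IntCoords ∧ D.InHeight h) ↔
      ∃ y : V → ℤ, RowsWithin y h ∧
        ∃ X : V → ℤ, (BarDrawing.ofPoints G y fun v => X v).IsPlanar := by
  constructor
  · rintro ⟨D, hD, hplanar, hint, hheight⟩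
    have hint' : ∀ v, IsIntPt (D.pos v) := fun v => hint _ (hD.points_eq ▸ Set.mem_range_self v)
    choose X hX using fun v => (hint' v).1
    choose y hy using fun v => (hint' v).2
    have hpos : ∀ v, D.pos v = (((X v : ℤ) : ℝ), ((y v : ℤ) : ℝ)) :=
      fun v => Prod.ext (hX v) (hy v)
    refine ⟨y, rowsWithin_iff_cast.mpr ?_, X, (hD.isPlanar_iff hpos).mp hplanar⟩
    simpa [PolylineDrawing.InHeight, hD.points_eq, hpos] using hheight
  · rintro ⟨y, hrows, X, hplanar⟩
    let D : PolylineDrawing G := ⟨fun v => (X v, y v), fun _ _ => [], fun _ _ => rfl⟩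
    have hD : D.IsStraightLine := fun _ _ => rfl
    refine ⟨D, hD, (hD.isPlanar_iff fun _ => rfl).mpr hplanar, ?_, ?_⟩
    · simp [PolylineDrawing.IntCoords, hD.points_eq, D, IsIntPt]
    · simpa [PolylineDrawing.InHeight, hD.points_eq, D] using rowsWithin_iff_cast.mp hrows

namespace OrthDrawing

variable {V : Type*} {G : SimpleGraph V} {y : V → ℤ} {F : FlatVR G y} {D : OrthDrawing G}

theorem isPlanar_iff_toBarDrawing (hbox : ∀ v, (D.box v).pts = F.toBarDrawing.bar v)
    (hchain : ∀ {u v}, G.Adj u v →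
      D.chain u v = [F.toBarDrawing.port u v, F.toBarDrawing.port v u]) :
    D.IsPlanar ↔ F.toBarDrawing.IsPlanar := by
  have hcurve : ∀ {u v}, G.Adj u v → D.curve u v = F.toBarDrawing.curve u v := fun huv => by
    rw [curve, hchain huv, chainSet_pair]
    rfl
  constructor
  · rintro ⟨hdisj, -, -, hbar, hedge⟩
    refine ⟨fun hne => ?_, fun {u v w P} huv hP hw => ?_, fun {u v a b P} huv hab hne hP hP' => ?_⟩
    · simpa only [hbox] using hdisj _ _ hne
    · simpa [hchain huv, eq_comm] using hbar u v w huv ⟨hcurve huv ▸ hP, hbox w ▸ hw⟩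
    · have := (hedge u v a b huv hab hne ⟨hcurve huv ▸ hP, hcurve hab ▸ hP'⟩).1
      simpa [hchain huv, eq_comm] using this
  · rintro ⟨hdisj, hbar, hedge⟩
    refine ⟨fun u v hne => ?_, fun u v huv => ?_, fun u v huv => ?_, fun u v w huv => ?_,
      fun u v a b huv hab hne => ?_⟩
    · simpa only [hbox] using hdisj hne
    · rw [hchain huv]
      have hne : F.toBarDrawing.port u v ≠ F.toBarDrawing.port v u :=
        (hdisj huv.ne).ne_of_mem (BarDrawing.port_mem_bar huv) (BarDrawing.port_mem_bar huv.symm)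
      refine ⟨isSimpleChain_pair.mpr hne, ?_, genuineBends_pair _ _⟩
      simp only [IsOrthoChain, chainSegs, List.tail_cons, List.zip_cons_cons, List.zip_nil_right,
        List.mem_singleton, forall_eq, BarDrawing.port, FlatVR.toBarDrawing_att, Int.cast_inj]
      exact or_iff_not_imp_right.mpr (F.vertical huv)
    · exact ⟨_, _, [], hchain huv, hbox u ▸ BarDrawing.port_mem_bar huv,
        hbox v ▸ BarDrawing.port_mem_bar huv.symm⟩
    · rintro P ⟨hP, hw⟩
      simpa [hchain huv, eq_comm] using hbar huv (hcurve huv ▸ hP) (hbox w ▸ hw)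
    · rintro P ⟨hP, hP'⟩
      rw [hcurve huv] at hP
      rw [hcurve hab] at hP'
      simpa [hchain huv, hchain hab, eq_comm] using
        And.intro (hedge huv hab hne hP hP') (hedge hab huv hne.symm hP' hP)

theorem pts_eq_bar {v : V} (h1 : (D.box v).x1 = F.left v) (h2 : (D.box v).x2 = F.right v)
    (hy : (D.box v).y1 = y v) (hflat : (D.box v).y1 = (D.box v).y2) :
    (D.box v).pts = F.toBarDrawing.bar v := by
  rw [Box.pts, h1, h2, ← hflat, hy, Set.Icc_self]
  rfl

theorem IsFlat.exists_port (hflat : D.IsFlat) (hplanar : D.IsPlanar) (hint : D.IntCoords)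
    (hy : ∀ v, (D.box v).y1 = y v) (u v : V) :
    ∃ a : ℤ, G.Adj u v → ((a : ℝ), (y u : ℝ)) ∈ (D.box u).pts ∧
      (D.chain u v).head? = some ((a : ℝ), (y u : ℝ)) := by
  by_cases huv : G.Adj u v
  swap
  · exact ⟨0, fun h => absurd h huv⟩
  obtain ⟨p, q, l, hchain, hp, -⟩ := hplanar.2.2.1 u v huv
  have hmem : p ∈ D.points := by
    refine Or.inr ?_
    simp only [mem_iUnion]
    exact ⟨u, v, huv, by simp [hchain]⟩
  obtain ⟨⟨a, ha⟩, -⟩ := hint p hmem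
  have hsnd : p.2 = y u := by
    rw [← hy]
    exact le_antisymm (hp.2.2.trans_eq (hflat u).symm) hp.2.1
  obtain rfl : p = ((a : ℝ), (y u : ℝ)) := Prod.ext ha hsnd
  exact ⟨a, fun _ => ⟨hp, by simp [hchain]⟩⟩

theorem exists_flatVR_of_isVR (hplanar : D.IsPlanar) (hflat : D.IsFlat) (hVR : D.IsVR)
    (hint : D.IntCoords) (hy : ∀ v, (D.box v).y1 = y v) :
    ∃ F : FlatVR G y, F.toBarDrawing.IsPlanar := by
  have corner_mem : ∀ v, ((D.box v).x1, (D.box v).y1) ∈ D.points ∧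
      ((D.box v).x2, (D.box v).y1) ∈ D.points := fun v =>
    ⟨Or.inl (mem_iUnion.mpr ⟨v, by simp⟩), Or.inl (mem_iUnion.mpr ⟨v, by simp⟩)⟩
  have x1_int : ∀ v, ∃ a : ℤ, (D.box v).x1 = a := fun v => (hint _ (corner_mem v).1).1
  have x2_int : ∀ v, ∃ a : ℤ, (D.box v).x2 = a := fun v => (hint _ (corner_mem v).2).1
  choose left hleft using x1_int
  choose right hright using x2_int
  choose att hatt using hflat.exists_port hplanar hint hy
  have hchain : ∀ {u v}, G.Adj u v →
      D.chain u v = [((att u v : ℝ), (y u : ℝ)), ((att v u : ℝ), (y v : ℝ))] := by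
    intro u v huv
    obtain ⟨p, q, hpq⟩ := List.length_eq_two.mp (hVR u v huv)
    have hp := (hatt u v huv).2
    have hq := (hatt v u huv.symm).2
    rw [D.chain_symm u v, hpq] at hq
    rw [hpq] at hp ⊢
    simp_all
  let F : FlatVR G y :=
    { left, right, att
      left_le_right := fun v => by
        have := (D.box v).hx
        rw [hleft, hright] at this
        exact_mod_cast this
      att_mem := fun {u v} huv => by
        have : (att u v : ℝ) ∈ Icc (D.box u).x1 (D.box u).x2 := (hatt u v huv).1.1
        rw [hleft, hright, mem_Icc] at this
        exact_mod_cast this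
      vertical := fun {u v} huv hne => by
        have := (hplanar.2.1 u v huv).2.1
        simpa [IsOrthoChain, chainSegs, hchain huv, hne] using this }
  exact ⟨F, (isPlanar_iff_toBarDrawing (F := F)
    (fun v => pts_eq_bar (hleft v) (hright v) (hy v) (hflat v)) hchain).mp hplanar⟩

open Classical in
/-- The flat visibility representation `F` as an orthogonal drawing. -/
noncomputable def ofFlatVR (F : FlatVR G y) : OrthDrawing G where
  box v := ⟨F.left v, F.right v, y v, y v, Int.cast_le.mpr (F.left_le_right v), le_rfl⟩
  chain u v := if G.Adj u v then [F.toBarDrawing.port u v, F.toBarDrawing.port v u] else []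
  chain_symm u v := by
    simp only [G.adj_comm v u]
    split_ifs <;> rfl

theorem ofFlatVR_chain {u v : V} (huv : G.Adj u v) :
    (ofFlatVR F).chain u v = [F.toBarDrawing.port u v, F.toBarDrawing.port v u] :=
  if_pos huv

theorem ofFlatVR_isVR : (ofFlatVR F).IsVR := fun _ _ huv => by
  rw [ofFlatVR_chain huv]
  rfl

theorem ofFlatVR_isPlanar_iff : (ofFlatVR F).IsPlanar ↔ F.toBarDrawing.IsPlanar :=
  isPlanar_iff_toBarDrawing (fun _ => pts_eq_bar rfl rfl rfl rfl) ofFlatVR_chain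

theorem exists_of_mem_points_ofFlatVR {p : Pt} (hp : p ∈ (ofFlatVR F).points) :
    ∃ v, ∃ a : ℤ, p = ((a : ℝ), (y v : ℝ)) := by
  simp only [points, mem_union, mem_iUnion, mem_ofPred_eq] at hp
  rcases hp with ⟨v, rfl | rfl | rfl | rfl⟩ | ⟨u, v, huv, hp⟩
  · exact ⟨v, F.left v, rfl⟩
  · exact ⟨v, F.left v, rfl⟩
  · exact ⟨v, F.right v, rfl⟩
  · exact ⟨v, F.right v, rfl⟩
  · rw [ofFlatVR_chain huv, List.mem_pair] at hp
    rcases hp with rfl | rfl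
    · exact ⟨u, F.att u v, rfl⟩
    · exact ⟨v, F.att v u, rfl⟩

end OrthDrawing

theorem exists_flatVR_iff {V : Type*} {G : SimpleGraph V} {h : ℕ} :
    (∃ D : OrthDrawing G, D.IsPlanar ∧ D.IsFlat ∧ D.IsVR ∧ D.IntCoords ∧ D.InHeight h) ↔
      ∃ y : V → ℤ, RowsWithin y h ∧ ∃ F : FlatVR G y, F.toBarDrawing.IsPlanar := by
  constructor
  · rintro ⟨D, hplanar, hflat, hVR, hint, y0, hheight⟩
    have corner_mem : ∀ v, ((D.box v).x1, (D.box v).y1) ∈ D.points :=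
      fun v => Or.inl (mem_iUnion.mpr ⟨v, by simp⟩)
    choose y hy using fun v => (hint _ (corner_mem v)).2
    exact ⟨y, rowsWithin_iff_cast.mpr ⟨y0, fun v => hy v ▸ hheight _ (corner_mem v)⟩,
      D.exists_flatVR_of_isVR hplanar hflat hVR hint hy⟩
  · rintro ⟨y, hrows, F, hF⟩
    obtain ⟨y0, hy0⟩ := rowsWithin_iff_cast.mp hrows
    refine ⟨.ofFlatVR F, OrthDrawing.ofFlatVR_isPlanar_iff.mpr hF, fun _ => rfl,
      OrthDrawing.ofFlatVR_isVR, fun p hp => ?_, y0, fun p hp => ?_⟩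
    · obtain ⟨v, a, rfl⟩ := OrthDrawing.exists_of_mem_points_ofFlatVR hp
      exact ⟨⟨a, rfl⟩, ⟨y v, rfl⟩⟩
    · obtain ⟨v, a, rfl⟩ := OrthDrawing.exists_of_mem_points_ofFlatVR hp
      exact hy0 v

section Sweep

variable {V : Type*} {G : SimpleGraph V} {y : V → ℤ} {X : V → ℝ}

theorem BarDrawing.ofPoints_hi (t : ℝ) (o : Obj G y) :
    (BarDrawing.ofPoints G y X).hi t o = (BarDrawing.ofPoints G y X).lo t o := by
  cases o <;> rfl

theorem BarDrawing.ofPoints_lo_of_eq_end {v : V} {o : Obj G y} (h : o.bot = v ∨ o.top = v) :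
    (BarDrawing.ofPoints G y X).lo (y v) o = X v := by
  cases o with
  | vertex w => rcases h with rfl | rfl <;> rfl
  | edge e =>
    rcases h with rfl | rfl
    · exact e.lineAt_bot _ _
    · exact e.lineAt_top _ _

theorem BarDrawing.RowOrdered.edgeX_ne (hD : (BarDrawing.ofPoints G y X).RowOrdered)
    {e f : UpEdge G y} {r : ℝ} (hne : e ≠ f) (he : (Obj.edge e).Active r)
    (hf : (Obj.edge f).Active r) :
    (BarDrawing.ofPoints G y X).edgeX e r ≠ (BarDrawing.ofPoints G y X).edgeX f r :=
  (hD.separated (by simpa using hne) he hf).elim ne_of_lt ne_of_gt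

/-- Two edges that swap their order cross strictly between the two heights. -/
theorem BarDrawing.RowOrdered.edgeX_le_of_edgeX_lt (hD : (BarDrawing.ofPoints G y X).RowOrdered)
    {e f : UpEdge G y} {s t : ℝ}
    (hs : s ∈ Icc (y e.bot : ℝ) (y e.top) ∩ Icc (y f.bot : ℝ) (y f.top))
    (ht : t ∈ Icc (y e.bot : ℝ) (y e.top) ∩ Icc (y f.bot : ℝ) (y f.top))
    (hlt : (BarDrawing.ofPoints G y X).edgeX e s < (BarDrawing.ofPoints G y X).edgeX f s) :
    (BarDrawing.ofPoints G y X).edgeX e t ≤ (BarDrawing.ofPoints G y X).edgeX f t := by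
  by_contra! hgt
  let gap := fun r => (BarDrawing.ofPoints G y X).edgeX f r - (BarDrawing.ofPoints G y X).edgeX e r
  have hcont : Continuous gap := (f.continuous_lineAt _ _).sub (e.continuous_lineAt _ _)
  have gap_s : 0 < gap s := sub_pos.mpr hlt
  have gap_t : gap t < 0 := sub_neg.mpr hgt
  have hne : e ≠ f := by rintro rfl; exact lt_irrefl _ hlt
  have no_zero : ∀ a ∈ Icc (y e.bot : ℝ) (y e.top) ∩ Icc (y f.bot : ℝ) (y f.top),
      ∀ b ∈ Icc (y e.bot : ℝ) (y e.top) ∩ Icc (y f.bot : ℝ) (y f.top),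
      ∀ r ∈ Ioo a b, gap r ≠ 0 := fun a ha b hb r hr h =>
    hD.edgeX_ne hne ⟨ha.1.1.trans_lt hr.1, hr.2.trans_le hb.1.2⟩
      ⟨ha.2.1.trans_lt hr.1, hr.2.trans_le hb.2.2⟩ (sub_eq_zero.mp h).symm
  rcases le_total s t with hst | hts
  · obtain ⟨r, hr, h⟩ := intermediate_value_Ioo' hst hcont.continuousOn ⟨gap_t, gap_s⟩
    exact no_zero s hs t ht r hr h
  · obtain ⟨r, hr, h⟩ := intermediate_value_Ioo hts hcont.continuousOn ⟨gap_t, gap_s⟩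
    exact no_zero t ht s hs r hr h

theorem BarDrawing.RowOrdered.lo_le_of_lo_lt (hD : (BarDrawing.ofPoints G y X).RowOrdered)
    {o o' : Obj G y} {s t : ℝ}
    (hs : s ∈ Icc (y o.bot : ℝ) (y o.top) ∩ Icc (y o'.bot : ℝ) (y o'.top))
    (ht : t ∈ Icc (y o.bot : ℝ) (y o.top) ∩ Icc (y o'.bot : ℝ) (y o'.top))
    (hlt : (BarDrawing.ofPoints G y X).lo s o < (BarDrawing.ofPoints G y X).lo s o') :
    (BarDrawing.ofPoints G y X).lo t o ≤ (BarDrawing.ofPoints G y X).lo t o' := by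
  have single : ∀ v : V, s ∈ Icc (y v : ℝ) (y v) → t ∈ Icc (y v : ℝ) (y v) → s = t :=
    fun v h h' => (le_antisymm h.2 h.1).trans (le_antisymm h'.1 h'.2)
  rcases o with v | e
  · exact single v hs.1 ht.1 ▸ hlt.le
  rcases o' with w | f
  · exact single w hs.2 ht.2 ▸ hlt.le
  · exact hD.edgeX_le_of_edgeX_lt hs ht hlt

/-- An edge in the row of its ends runs between the facing ends of their bars. -/
theorem exists_attachments (X : V → ℝ) {left right : V → ℤ} {col : UpEdge G y → ℤ}
    (left_le_right : ∀ v, left v ≤ right v)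
    (col_mem : ∀ {e : UpEdge G y} {v}, e.bot = v ∨ e.top = v → col e ∈ Icc (left v) (right v)) :
    ∃ att : V → V → ℤ, (∀ u v, att u v ∈ Icc (left u) (right u)) ∧
      (∀ {e : UpEdge G y} {u v}, s(e.bot, e.top) = s(u, v) → att u v = col e) ∧
      ∀ {u v}, y u = y v → X u < X v → att u v = right u ∧ att v u = left v := by
  classical
  let att := fun u v => if h : ∃ e : UpEdge G y, s(e.bot, e.top) = s(u, v) then col h.choose
    else if X u < X v then right u else left u
  have att_edge : ∀ {e : UpEdge G y} {u v}, s(e.bot, e.top) = s(u, v) → att u v = col e := by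
    intro e u v h
    have hex : ∃ e : UpEdge G y, s(e.bot, e.top) = s(u, v) := ⟨e, h⟩
    simp only [att, dif_pos hex, UpEdge.eq_of_sym2_eq (hex.choose_spec.trans h.symm)]
  refine ⟨att, fun u v => ?_, att_edge, fun {u v} hy hlt => ?_⟩
  · by_cases h : ∃ e : UpEdge G y, s(e.bot, e.top) = s(u, v)
    · obtain ⟨e, he⟩ := h
      rw [att_edge he]
      exact col_mem (Sym2.mem_iff.mp (he ▸ Sym2.mem_mk_left u v) |>.imp Eq.symm Eq.symm)
    · simp only [att, dif_neg h]
      split_ifs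
      exacts [⟨left_le_right u, le_rfl⟩, ⟨le_rfl, left_le_right u⟩]
  · have not_upEdge : ∀ {a b}, y a = y b → ¬∃ e : UpEdge G y, s(e.bot, e.top) = s(a, b) := by
      rintro a b hab ⟨e, he⟩
      have := e.lt
      rcases Sym2.eq_iff.mp he with ⟨rfl, rfl⟩ | ⟨rfl, rfl⟩ <;> omega
    simp only [att, dif_neg (not_upEdge hy), dif_neg (not_upEdge hy.symm), hlt, hlt.not_gt, if_true,
      if_false, and_self]

/-- The bar of `v` spans the abscissae that `f` gives to `v` and to the edges at `v`. -/
theorem FlatVR.exists_of_abscissae [Finite V] (X : V → ℝ) (f : Obj G y → ℤ) :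
    ∃ F : FlatVR G y,
      (∀ v, ∃ o : Obj G y, (o.bot = v ∨ o.top = v) ∧ F.left v = f o) ∧
      (∀ v, ∃ o : Obj G y, (o.bot = v ∨ o.top = v) ∧ F.right v = f o) ∧
      (∀ e : UpEdge G y, F.att e.bot e.top = f (.edge e)) ∧
      ∀ {u v}, y u = y v → X u < X v → F.att u v = F.right u ∧ F.att v u = F.left v := by
  have hne : ∀ v, {o : Obj G y | o.bot = v ∨ o.top = v}.Nonempty := fun v => ⟨.vertex v, .inl rfl⟩
  choose leftmost leftmost_mem leftmost_le using
    fun v => Set.exists_min_image _ f (Set.toFinite _) (hne v)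
  choose rightmost rightmost_mem le_rightmost using
    fun v => Set.exists_max_image _ f (Set.toFinite _) (hne v)
  have left_le_right : ∀ v, f (leftmost v) ≤ f (rightmost v) :=
    fun v => leftmost_le v _ (rightmost_mem v)
  obtain ⟨att, att_mem, att_edge, tight⟩ := exists_attachments X left_le_right
    (col := fun e => f (.edge e))
    fun {e v} h => ⟨leftmost_le v (.edge e) h, le_rightmost v (.edge e) h⟩
  refine ⟨⟨fun v => f (leftmost v), fun v => f (rightmost v), att, left_le_right,
    fun _ => att_mem _ _, fun {u v} huv hy => ?_⟩, fun v => ⟨_, leftmost_mem v, rfl⟩,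
    fun v => ⟨_, rightmost_mem v, rfl⟩, fun e => att_edge rfl, tight⟩
  obtain ⟨e, he⟩ := UpEdge.exists_sym2_eq huv hy
  rw [att_edge he, att_edge (he.trans Sym2.eq_swap)]

end Sweep

section SweepOrder

variable {V : Type*} {G : SimpleGraph V} {y : V → ℤ} {X : V → ℝ} {F : FlatVR G y}

/-- The abscissa of a vertical edge. -/
def FlatVR.col (F : FlatVR G y) (e : UpEdge G y) : ℤ := F.att e.bot e.top

/-- The left end of an object; vertical edges have a constant abscissa. -/
def FlatVR.lo (F : FlatVR G y) : Obj G y → ℤ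
  | .vertex v => F.left v
  | .edge e => F.col e

/-- The right end of an object; vertical edges have a constant abscissa. -/
def FlatVR.hi (F : FlatVR G y) : Obj G y → ℤ
  | .vertex v => F.right v
  | .edge e => F.col e

theorem FlatVR.edgeX_toBarDrawing (e : UpEdge G y) (t : ℝ) :
    F.toBarDrawing.edgeX e t = F.col e := by
  rw [FlatVR.col, BarDrawing.edgeX, FlatVR.toBarDrawing_att, FlatVR.toBarDrawing_att,
    F.vertical e.adj.symm e.lt.ne', UpEdge.lineAt_self]

theorem FlatVR.lo_toBarDrawing (t : ℝ) (o : Obj G y) : F.toBarDrawing.lo t o = F.lo o := by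
  cases o
  · rfl
  · exact edgeX_toBarDrawing _ t

theorem FlatVR.hi_toBarDrawing (t : ℝ) (o : Obj G y) : F.toBarDrawing.hi t o = F.hi o := by
  cases o
  · rfl
  · exact edgeX_toBarDrawing _ t

theorem Obj.mem_Icc_of_eq_end {v : V} {o : Obj G y} (h : o.bot = v ∨ o.top = v) :
    (y v : ℝ) ∈ Icc (y o.bot : ℝ) (y o.top) := by
  rcases h with rfl | rfl
  · exact ⟨le_rfl, o.bot_le_top⟩
  · exact ⟨o.bot_le_top, le_rfl⟩

theorem Obj.exists_abscissa_eq_of_active {f g : Obj G y → ℤ}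
    (hvertex : ∀ v, ∃ p : Obj G y, (p.bot = v ∨ p.top = v) ∧ g (.vertex v) = f p)
    (hedge : ∀ e, g (.edge e) = f (.edge e)) {t : ℝ} {o : Obj G y} (ho : o.Active t) :
    ∃ p : Obj G y, t ∈ Icc (y p.bot : ℝ) (y p.top) ∧ g o = f p ∧
      (BarDrawing.ofPoints G y X).lo t p = (BarDrawing.ofPoints G y X).lo t o := by
  cases o with
  | vertex v =>
    obtain rfl : (y v : ℝ) = t := ho
    obtain ⟨p, hp, hgf⟩ := hvertex v
    exact ⟨p, Obj.mem_Icc_of_eq_end hp, hgf, BarDrawing.ofPoints_lo_of_eq_end hp⟩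
  | edge e => exact ⟨.edge e, ho.mem_Icc, hedge e, rfl⟩

theorem exists_flatVR_isPlanar_of_ofPoints [Finite V]
    (hX : (BarDrawing.ofPoints G y X).IsPlanar) :
    ∃ F : FlatVR G y, F.toBarDrawing.IsPlanar := by
  replace hX := hX.rowOrdered
  obtain ⟨f, hf⟩ := exists_int_strictMono_of_weakly_consistent
    (fun o : Obj G y => (y o.bot : ℝ)) (fun o => (y o.top : ℝ))
    (fun o t => (BarDrawing.ofPoints G y X).lo t o)
    fun _ _ _ hs _ ht => hX.lo_le_of_lo_lt hs ht
  obtain ⟨F, hleft, hright, hedge, htight⟩ := FlatVR.exists_of_abscissae X f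
  have order : ∀ {t} {o o' : Obj G y}, o.Active t → o'.Active t →
      (BarDrawing.ofPoints G y X).hi t o < (BarDrawing.ofPoints G y X).lo t o' →
      F.toBarDrawing.hi t o < F.toBarDrawing.lo t o' := by
    intro t o o' ho ho' hlt
    obtain ⟨p, hp, hhi, hpo⟩ :=
      Obj.exists_abscissa_eq_of_active (X := X) (g := F.hi) hright hedge ho
    obtain ⟨q, hq, hlo, hqo⟩ :=
      Obj.exists_abscissa_eq_of_active (X := X) (g := F.lo) hleft hedge ho'
    rw [F.hi_toBarDrawing, F.lo_toBarDrawing, hhi, hlo, Int.cast_lt]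
    exact hf p q t ⟨hp, hq⟩ (by rwa [hpo, hqo, ← BarDrawing.ofPoints_hi])
  refine ⟨F, BarDrawing.isPlanar_iff_rowOrdered.mpr (hX.of_order_preserving ?_ order)⟩
  intro u v huv hy hlt
  have hXuv : X u < X v := (hX.right_lt_left_or huv.ne hy).resolve_right fun hvu => by
    have h := order (t := y u) (o := .vertex v) (o' := .vertex u) (by simp [Obj.Active, hy]) rfl hvu
    exact (h.trans_le (F.toBarDrawing.left_le_right u)).not_ge
      (hlt.le.trans (F.toBarDrawing.left_le_right v))
  simpa using htight hy hXuv

end SweepOrder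

/-- The edge turned upside down. -/
def UpEdge.flip {V : Type*} {G : SimpleGraph V} {y : V → ℤ} (e : UpEdge G y) :
    UpEdge G fun v => -y v where
  bot := e.top
  top := e.bot
  adj := e.adj.symm
  lt := neg_lt_neg e.lt

/-- The row `t` lies strictly between the rows of the ends of `e`. -/
def UpEdge.Crosses {V : Type*} {G : SimpleGraph V} {y : V → ℤ} (e : UpEdge G y) (t : ℤ) : Prop :=
  y e.bot < t ∧ t < y e.top

theorem UpEdge.Crosses.flip {V : Type*} {G : SimpleGraph V} {y : V → ℤ} {e : UpEdge G y} {t : ℤ}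
    (he : e.Crosses t) : e.flip.Crosses (-t) :=
  ⟨neg_lt_neg he.2, neg_lt_neg he.1⟩

namespace FlatVR

variable {V : Type*} {G : SimpleGraph V} {y : V → ℤ} (F : FlatVR G y)

/-- The representation turned upside down. -/
def flip : FlatVR G fun v => -y v where
  left := F.left
  right := F.right
  att := F.att
  left_le_right := F.left_le_right
  att_mem := F.att_mem
  vertical huv hy := F.vertical huv fun h => hy (congrArg Neg.neg h)

theorem col_mem_bot (e : UpEdge G y) : F.col e ∈ Icc (F.left e.bot) (F.right e.bot) :=
  F.att_mem e.adj

theorem col_eq_att_top (e : UpEdge G y) : F.col e = F.att e.top e.bot :=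
  F.vertical e.adj e.lt.ne

theorem col_mem_top (e : UpEdge G y) : F.col e ∈ Icc (F.left e.top) (F.right e.top) :=
  F.col_eq_att_top e ▸ F.att_mem e.adj.symm

theorem flip_col (e : UpEdge G y) : F.flip.col e.flip = F.col e :=
  (F.col_eq_att_top e).symm

/-- Vertices are disjoint from each other and from the edges that cross their rows. -/
structure Noncrossing : Prop where
  vertex_vertex : ∀ {v w}, v ≠ w → y v = y w → F.right v < F.left w ∨ F.right w < F.left v
  edge_vertex : ∀ {e : UpEdge G y} {v}, e.Crosses (y v) → F.col e < F.left v ∨ F.right v < F.col e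

/-- The cut between the columns `k` and `k + 1` hits no vertex of row `t`. -/
def Gap (t k : ℤ) : Prop := ∀ v, y v = t → F.right v ≤ k ∨ k < F.left v

variable {F}

theorem gap_flip {t k : ℤ} : F.flip.Gap t k ↔ F.Gap (-t) k :=
  forall_congr' fun _ => imp_congr_left neg_eq_iff_eq_neg

namespace Noncrossing

theorem flip (hF : F.Noncrossing) : F.flip.Noncrossing where
  vertex_vertex hne hy := hF.vertex_vertex hne (neg_injective hy)
  edge_vertex {e v} he := by
    let e' : UpEdge G y := ⟨e.top, e.bot, e.adj.symm, neg_lt_neg_iff.mp e.lt⟩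
    rw [show F.flip.col e = F.col e' from F.flip_col e']
    exact hF.edge_vertex ⟨neg_lt_neg_iff.mp he.2, neg_lt_neg_iff.mp he.1⟩

theorem gap_right (hF : F.Noncrossing) (v : V) : F.Gap (y v) (F.right v) := by
  intro w hw
  rcases eq_or_ne w v with rfl | hne
  · exact .inl le_rfl
  · exact (hF.vertex_vertex hne hw).imp (fun h => (h.trans_le (F.left_le_right v)).le) id

theorem gap_left_sub_one (hF : F.Noncrossing) (v : V) : F.Gap (y v) (F.left v - 1) := by
  intro w hw
  rcases eq_or_ne w v with rfl | hne
  · exact .inr (sub_one_lt _)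
  · refine (hF.vertex_vertex hne hw).imp Int.le_sub_one_of_lt fun h => ?_
    exact (sub_one_lt _).trans ((F.left_le_right v).trans_lt h)

theorem gap_col (hF : F.Noncrossing) {e : UpEdge G y} {t : ℤ} (he : e.Crosses t) :
    F.Gap t (F.col e) := by
  rintro w rfl
  exact (hF.edge_vertex he).symm.imp le_of_lt id

theorem gap_col_sub_one (hF : F.Noncrossing) {e : UpEdge G y} {t : ℤ} (he : e.Crosses t) :
    F.Gap t (F.col e - 1) := by
  rintro w rfl
  exact (hF.edge_vertex he).symm.imp Int.le_sub_one_of_lt (sub_one_lt _).trans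

theorem right_top_lt_col (hF : F.Noncrossing) {e f : UpEdge G y} (hne : e.top ≠ f.top)
    (hbot : y f.bot < y e.top) (htop : y e.top ≤ y f.top) (hef : F.col e < F.col f) :
    F.right e.top < F.col f := by
  have left_le := (F.col_mem_top e).1
  rcases htop.lt_or_eq with htop | htop
  · have := hF.edge_vertex ⟨hbot, htop⟩
    omega
  · have := hF.vertex_vertex hne htop
    have := F.col_mem_top f
    grind

theorem col_lt_left_top (hF : F.Noncrossing) {e f : UpEdge G y} (hne : f.top ≠ e.top)
    (hbot : y e.bot < y f.top) (htop : y f.top ≤ y e.top) (hef : F.col e < F.col f) :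
    F.col e < F.left f.top := by
  have le_right := (F.col_mem_top f).2
  rcases htop.lt_or_eq with htop | htop
  · have := hF.edge_vertex ⟨hbot, htop⟩
    omega
  · have := hF.vertex_vertex hne htop
    have := F.col_mem_top e
    grind

end Noncrossing

variable (F) in
/-- What is needed of the total bending moment `Φ t k` about height `t` of the edges in the columns
up to `k`. -/
structure IsPotential (Φ : ℤ → ℤ → ℝ) : Prop where
  concave : ∀ {t k}, F.Gap t k → Φ (t + 1) k + Φ (t - 1) k ≤ 2 * Φ t k
  jump : ∀ {t k}, Φ t (k - 1) ≠ Φ t k → ∃ e : UpEdge G y, F.col e = k ∧ e.Crosses t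
  vanishes : ∃ K, ∀ t k, K < |t| ∨ K < |k| → Φ t k = 0

namespace IsPotential

variable {Φ : ℤ → ℤ → ℝ}

theorem flip (hΦ : F.IsPotential Φ) : F.flip.IsPotential fun t k => Φ (-t) k where
  concave {t k} hgap := by
    have := hΦ.concave (gap_flip.mp hgap)
    rwa [neg_add', neg_sub', sub_neg_eq_add, add_comm]
  jump hne := by
    obtain ⟨e, he, hcross⟩ := hΦ.jump hne
    exact ⟨e.flip, (F.flip_col e).trans he, by simpa using hcross.flip⟩
  vanishes := hΦ.vanishes.imp fun K hK t k h => hK _ _ (by rwa [abs_neg])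

theorem add_one_eq_and_sub_one_eq (hΦ : F.IsPotential Φ) {m : ℝ} (hm : ∀ t k, m ≤ Φ t k)
    {t k : ℤ} (hgap : F.Gap t k) (h : Φ t k = m) : Φ (t + 1) k = m ∧ Φ (t - 1) k = m := by
  have := hΦ.concave hgap
  have := hm (t + 1) k
  have := hm (t - 1) k
  constructor <;> linarith

theorem eq_right_of_mem_bar (hF : F.Noncrossing) (hΦ : F.IsPotential Φ) {v : V} {k : ℤ}
    (hk : k ∈ Icc (F.left v - 1) (F.right v)) : Φ (y v) k = Φ (y v) (F.right v) := by
  obtain ⟨hleft, hright⟩ := hk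
  induction k, hright using Int.leInductionDown with
  | base => rfl
  | pred k hk ih =>
    refine (not_ne_iff.mp fun hne => ?_).trans (ih (by omega))
    obtain ⟨e, he, hcross⟩ := hΦ.jump hne
    have := hF.edge_vertex hcross
    omega

theorem exists_gap_eq (hF : F.Noncrossing) (hΦ : F.IsPotential Φ) (t k : ℤ) :
    ∃ k' ≥ k, F.Gap t k' ∧ Φ t k' = Φ t k ∧
      ∀ {e : UpEdge G y}, e.Crosses t → k < F.col e → k' < F.col e := by
  by_cases hgap : F.Gap t k
  · exact ⟨k, le_rfl, hgap, rfl, fun _ => id⟩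
  · simp only [Gap, not_forall, not_or, not_le, not_lt] at hgap
    obtain ⟨v, rfl, hright, hleft⟩ := hgap
    refine ⟨F.right v, hright.le, hF.gap_right v,
      (hΦ.eq_right_of_mem_bar hF ⟨by omega, hright.le⟩).symm, fun he hk => ?_⟩
    have := hF.edge_vertex he
    omega

theorem nonneg (hF : F.Noncrossing) (hΦ : F.IsPotential Φ) (t k : ℤ) : 0 ≤ Φ t k := by
  obtain ⟨K, hK⟩ := hΦ.vanishes
  by_contra! hneg
  have mem_box : ∀ {t k}, Φ t k < 0 → (t, k) ∈ Icc (-K) K ×ˢ Icc (-K) K := fun {t k} h => by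
    by_contra hout
    refine h.ne (hK t k ?_)
    contrapose! hout
    exact ⟨abs_le.mp hout.1, abs_le.mp hout.2⟩
  obtain ⟨⟨t₀, k₀⟩, -, hmin⟩ := Set.exists_min_image _ (fun p : ℤ × ℤ => Φ p.1 p.2)
    ((finite_Icc (-K) K).prod (finite_Icc (-K) K)) ⟨_, mem_box hneg⟩
  have min_neg : Φ t₀ k₀ < 0 := (hmin _ (mem_box hneg)).trans_lt hneg
  have min_le : ∀ t k, Φ t₀ k₀ ≤ Φ t k := fun t k => by
    by_cases h : Φ t k < 0
    · exact hmin _ (mem_box h)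
    · exact min_neg.le.trans (not_lt.mp h)
  have climbs : ∀ t ≥ t₀, ∃ k, Φ t k = Φ t₀ k₀ := fun t ht => by
    induction t, ht using Int.leInduction with
    | base => exact ⟨k₀, rfl⟩
    | succ t _ ih =>
      obtain ⟨k, hk⟩ := ih
      obtain ⟨k', -, hgap, hk', -⟩ := hΦ.exists_gap_eq hF t k
      exact ⟨k', (hΦ.add_one_eq_and_sub_one_eq min_le hgap (hk'.trans hk)).1⟩
  obtain ⟨k, hk⟩ := climbs (max t₀ (K + 1)) (le_max_left _ _)
  have := hK (max t₀ (K + 1)) k (.inl (lt_of_lt_of_le (by omega) (le_abs_self _)))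
  exact min_neg.ne (hk.symm.trans this)

theorem eq_zero_of_gaps (hF : F.Noncrossing) (hΦ : F.IsPotential Φ) {t T k : ℤ} (hT : t ≤ T)
    (hgap : ∀ s, t ≤ s → s < T → F.Gap s k) (h : Φ t k = 0) : Φ T k = 0 := by
  induction T, hT using Int.leInduction with
  | base => exact h
  | succ T hT ih =>
    have := ih fun s hs hsT => hgap s hs (by omega)
    exact (hΦ.add_one_eq_and_sub_one_eq (hΦ.nonneg hF) (hgap T hT (by omega)) this).1

theorem exists_eq_zero_below (hF : F.Noncrossing) (hΦ : F.IsPotential Φ) {e : UpEdge G y}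
    {t s k : ℤ} (he : e.Crosses t) (hs : t ≤ s) (hse : s < y e.top) (hk : k < F.col e)
    (h : Φ s k = 0) : ∃ k' ≥ k, k' < F.col e ∧ Φ t k' = 0 := by
  induction s, hs using Int.leInduction generalizing k with
  | base => exact ⟨k, le_rfl, hk, h⟩
  | succ s hs ih =>
    obtain ⟨j, hkj, hgap, hj, hlt⟩ := hΦ.exists_gap_eq hF (s + 1) k
    have hzero := (hΦ.add_one_eq_and_sub_one_eq (hΦ.nonneg hF) hgap (hj.trans h)).2
    rw [add_sub_cancel_right] at hzero
    obtain ⟨k', hjk', hk'⟩ := ih (by omega) (hlt ⟨by have := he.1; omega, hse⟩ hk) hzero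
    exact ⟨k', hkj.le.trans hjk', hk'⟩

theorem col_top_eq_zero (hF : F.Noncrossing) (hΦ : F.IsPotential Φ) {e : UpEdge G y} {t k : ℤ}
    (he : e.Crosses t) (hk : k = F.col e ∨ k = F.col e - 1) (h : Φ t k = 0) {j : ℤ}
    (hj : j ∈ Icc (F.left e.top - 1) (F.right e.top)) : Φ (y e.top) j = 0 := by
  have hcol := F.col_mem_top e
  rw [hΦ.eq_right_of_mem_bar hF hj, ← hΦ.eq_right_of_mem_bar hF (v := e.top) (k := k)]
  · refine hΦ.eq_zero_of_gaps hF he.2.le (fun s hs hse => ?_) h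
    have hcross : e.Crosses s := ⟨he.1.trans_le hs, hse⟩
    rcases hk with rfl | rfl
    exacts [hF.gap_col hcross, hF.gap_col_sub_one hcross]
  · have := hcol.1
    have := hcol.2
    constructor <;> omega

theorem top_eq_top (hF : F.Noncrossing) (hΦ : F.IsPotential Φ) {e f : UpEdge G y} {t : ℤ}
    (he : e.Crosses t) (hf : f.Crosses t) (hef : F.col e < F.col f)
    (hzero_left : Φ t (F.col e - 1) = 0) (hzero_right : Φ t (F.col f) = 0)
    (hne : ∀ k, F.col e ≤ k → k < F.col f → Φ t k ≠ 0) : e.top = f.top := by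
  by_contra htop
  have ne_zero_above : ∀ k, F.col e ≤ k → k < F.col f → ∀ T, t < T → T ≤ y f.top → F.Gap T k →
      Φ T k ≠ 0 := fun k hek hkf T hT hTf hgap h => by
    obtain ⟨k', hk, hkf', h⟩ := hΦ.exists_eq_zero_below hF hf (Int.le_sub_one_of_lt hT)
      (Int.sub_one_lt_of_le hTf) hkf (hΦ.add_one_eq_and_sub_one_eq (hΦ.nonneg hF) hgap h).2
    exact hne k' (hek.trans hk) hkf' h
  rcases le_total (y e.top) (y f.top) with hle | hle
  · exact ne_zero_above (F.right e.top) (F.col_mem_top e).2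
      (hF.right_top_lt_col htop (hf.1.trans he.2) hle hef) _ he.2 hle (hF.gap_right _)
      (hΦ.col_top_eq_zero hF he (.inr rfl) hzero_left
        ⟨(sub_one_lt _).le.trans (F.left_le_right _), le_rfl⟩)
  · exact ne_zero_above (F.left f.top - 1)
      (Int.le_sub_one_of_lt (hF.col_lt_left_top (Ne.symm htop) (he.1.trans hf.2) hle hef))
      (Int.sub_one_lt_of_le (F.col_mem_top f).1) _ hf.2 le_rfl (hF.gap_left_sub_one _)
      (hΦ.col_top_eq_zero hF hf (.inl rfl) hzero_right
        ⟨le_rfl, (sub_one_lt _).le.trans (F.left_le_right _)⟩)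

theorem exists_maximal_run (hΦ : F.IsPotential Φ) {t k : ℤ} (h : Φ t k ≠ 0) :
    ∃ a b, a < k ∧ k < b ∧ Φ t a = 0 ∧ Φ t b = 0 ∧ ∀ j, a < j → j < b → Φ t j ≠ 0 := by
  obtain ⟨K, hK⟩ := hΦ.vanishes
  obtain ⟨a, ⟨hak, ha⟩, hmax⟩ := Int.exists_greatest_of_bdd (P := fun j => j ≤ k ∧ Φ t j = 0)
    ⟨k, fun _ hj => hj.1⟩ ⟨min k (-|K| - 1), min_le_left _ _, hK _ _ (.inr (by grind))⟩
  obtain ⟨b, ⟨hkb, hb⟩, hmin⟩ := Int.exists_least_of_bdd (P := fun j => k ≤ j ∧ Φ t j = 0)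
    ⟨k, fun _ hj => hj.1⟩ ⟨max k (|K| + 1), le_max_left _ _, hK _ _ (.inr (by grind))⟩
  refine ⟨a, b, hak.lt_of_ne (by rintro rfl; exact h ha), hkb.lt_of_ne (by rintro rfl; exact h hb),
    ha, hb, fun j haj hjb hj => ?_⟩
  rcases le_total j k with hjk | hkj
  · exact (hmax j ⟨hjk, hj⟩).not_gt haj
  · exact (hmin j ⟨hkj, hj⟩).not_gt hjb

/-- A maximal run of columns with nonzero moment is bounded by two edges with the same ends. -/
theorem eq_zero (hF : F.Noncrossing) (hΦ : F.IsPotential Φ) (t k : ℤ) : Φ t k = 0 := by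
  by_contra h
  obtain ⟨a, b, hak, hkb, ha, hb, hne⟩ := hΦ.exists_maximal_run h
  obtain ⟨e, he, hecross⟩ := hΦ.jump (t := t) (k := a + 1) (by
    rw [add_sub_cancel_right, ha]
    exact (hne _ (by omega) (by omega)).symm)
  obtain ⟨f, hf, hfcross⟩ := hΦ.jump (t := t) (k := b) (by
    rw [hb]
    exact hne _ (by omega) (by omega))
  have zero_left : Φ t (F.col e - 1) = 0 := by rw [he, add_sub_cancel_right, ha]
  have zero_right : Φ t (F.col f) = 0 := by rw [hf, hb]
  have ne_zero : ∀ j, F.col e ≤ j → j < F.col f → Φ t j ≠ 0 :=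
    fun j hej hjf => hne j (by omega) (by omega)
  have htop : e.top = f.top :=
    hΦ.top_eq_top hF hecross hfcross (by omega) zero_left zero_right ne_zero
  have hbot : e.bot = f.bot := hΦ.flip.top_eq_top hF.flip hecross.flip hfcross.flip
    (by simpa only [F.flip_col] using (by omega : F.col e < F.col f))
    (by simpa only [F.flip_col, neg_neg] using zero_left)
    (by simpa only [F.flip_col, neg_neg] using zero_right)
    (by simpa only [F.flip_col, neg_neg] using ne_zero)
  obtain rfl : e = f := UpEdge.ext hbot htop
  omega

end IsPotential

end FlatVR

namespace Obj

variable {V : Type*} {G : SimpleGraph V} {y : V → ℤ}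

theorem active_edge_iff {e : UpEdge G y} {t : ℤ} : (edge e).Active (t : ℝ) ↔ e.Crosses t :=
  and_congr Int.cast_lt Int.cast_lt

/-- The abscissa at height `t` of an object in the straight-line drawing with the vertex `v` at
abscissa `X v`, as a linear functional of `X`. -/
@[simps] noncomputable def abscissa (t : ℝ) (o : Obj G y) : (V → ℝ) →ₗ[ℝ] ℝ where
  toFun X := (BarDrawing.ofPoints G y X).lo t o
  map_add' X X' := by
    cases o with
    | vertex v => rfl
    | edge e =>
      simp only [BarDrawing.lo, BarDrawing.edgeX, BarDrawing.ofPoints, UpEdge.lineAt,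
        AffineMap.lineMap_apply, Pi.add_apply, vsub_eq_sub, vadd_eq_add, smul_eq_mul]
      ring
  map_smul' c X := by
    cases o with
    | vertex v => rfl
    | edge e =>
      simp only [BarDrawing.lo, BarDrawing.edgeX, BarDrawing.ofPoints, UpEdge.lineAt,
        AffineMap.lineMap_apply, Pi.smul_apply, vsub_eq_sub, vadd_eq_add, smul_eq_mul,
        RingHom.id_apply]
      ring

theorem abscissa_congr {o : Obj G y} {t : ℝ} {X X' : V → ℝ}
    (h : ∀ v, o.bot = v ∨ o.top = v → X v = X' v) : o.abscissa t X = o.abscissa t X' := by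
  have hbot := h _ (.inl rfl)
  have htop := h _ (.inr rfl)
  cases o with
  | vertex v => exact hbot
  | edge e =>
    exact congrArg₂ (e.lineAt · · t) hbot htop

theorem abscissa_const_sub {o : Obj G y} {s : ℝ} (ho : o.Active s) (c : ℝ) :
    o.abscissa s (fun v => c - y v) = c - s := by
  cases o with
  | vertex v => exact congrArg (c - ·) ho
  | edge e =>
    have := (sub_pos.mpr e.cast_lt).ne'
    simp only [abscissa_apply, BarDrawing.lo, BarDrawing.edgeX, BarDrawing.ofPoints, UpEdge.lineAt,
      AffineMap.lineMap_apply, vsub_eq_sub, vadd_eq_add, smul_eq_mul]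
    field_simp
    ring

end Obj

namespace FlatVR

variable {V : Type*} {G : SimpleGraph V} {y : V → ℤ} {F : FlatVR G y}

theorem hi_mem_of_eq_end {o : Obj G y} {v : V} (h : o.bot = v ∨ o.top = v) :
    F.hi o ∈ Icc (F.left v) (F.right v) := by
  cases o with
  | vertex w => rcases h with rfl | rfl <;> exact ⟨F.left_le_right _, le_rfl⟩
  | edge e =>
    rcases h with rfl | rfl
    exacts [F.col_mem_bot e, F.col_mem_top e]

theorem lo_le_hi (o : Obj G y) : F.lo o ≤ F.hi o := by
  cases o
  · exact F.left_le_right _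
  · exact le_rfl

theorem Gap.right_le_iff {t k : ℤ} (hgap : F.Gap t k) {o : Obj G y} {v : V}
    (h : o.bot = v ∨ o.top = v) (hv : y v = t) : F.right v ≤ k ↔ F.hi o ≤ k := by
  have := F.hi_mem_of_eq_end h
  have := hgap v hv
  grind

theorem Noncrossing.gap_hi (hF : F.Noncrossing) {t : ℤ} {o : Obj G y} (ho : o.Active (t : ℝ)) :
    F.Gap t (F.hi o) := by
  cases o with
  | vertex v =>
    obtain rfl : y v = t := Int.cast_injective ho
    exact hF.gap_right v
  | edge e => exact hF.gap_col (Obj.active_edge_iff.mp ho)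

variable (F) in
/-- A unit force at height `s` on the edge `o`, seen as a beam supported at its ends, has this
bending moment at height `t`; it is counted for the cut to the right of column `k` when `o` lies to
the left of the cut. -/
noncomputable def moment (s : ℤ) (o : Obj G y) (t k : ℤ) : ℝ :=
  if F.hi o ≤ k then max (t - s : ℝ) 0 - o.abscissa s (fun v => max (t - y v : ℝ) 0) else 0

theorem moment_eq_zero_of_notMem_Ioo {s t k : ℤ} {o : Obj G y} (ho : o.Active (s : ℝ))
    (ht : t ≤ y o.bot ∨ y o.top ≤ t) : F.moment s o t k = 0 := by
  obtain ⟨bot_le, le_top⟩ := ho.mem_Icc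
  have := o.bot_le_top
  have key : max (t - s : ℝ) 0 = o.abscissa s (fun v => max (t - y v : ℝ) 0) := by
    rcases ht with ht | ht
    · have ht : (t : ℝ) ≤ y o.bot := Int.cast_le.mpr ht
      rw [max_eq_right (by linarith), Obj.abscissa_congr (X' := 0), map_zero]
      rintro v (rfl | rfl) <;> exact max_eq_right (by linarith)
    · have ht : (y o.top : ℝ) ≤ t := Int.cast_le.mpr ht
      rw [max_eq_left (by linarith), ← Obj.abscissa_const_sub ho, Obj.abscissa_congr]
      rintro v (rfl | rfl) <;> exact (max_eq_left (by linarith)).symm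
  rw [moment, key, sub_self, ite_self]

theorem exists_crosses_of_moment_ne {s t k : ℤ} {o : Obj G y} (ho : o.Active (s : ℝ))
    (hne : F.moment s o t (k - 1) ≠ F.moment s o t k) :
    ∃ e : UpEdge G y, F.col e = k ∧ e.Crosses t := by
  have inner : y o.bot < t ∧ t < y o.top := by
    by_contra! hout
    have hout : t ≤ y o.bot ∨ y o.top ≤ t := (le_or_gt t _).imp_right hout
    exact hne (by rw [moment_eq_zero_of_notMem_Ioo ho hout, moment_eq_zero_of_notMem_Ioo ho hout])
  have hi_eq : F.hi o = k := by
    by_contra h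
    have : F.hi o ≤ k - 1 ↔ F.hi o ≤ k := by omega
    exact hne (by simp only [moment, this])
  cases o with
  | vertex v => exact (inner.1.not_gt inner.2).elim
  | edge e => exact ⟨e, hi_eq, inner⟩

theorem max_zero_second_difference (a b : ℤ) :
    max ((a + 1 : ℤ) - b : ℝ) 0 + max ((a - 1 : ℤ) - b : ℝ) 0 - 2 * max (a - b : ℝ) 0 =
      if b = a then 1 else 0 := by
  obtain ⟨n, rfl⟩ : ∃ n, a = b + n := ⟨a - b, by ring⟩
  push_cast
  rcases lt_trichotomy n 0 with h | rfl | h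
  · have : (n : ℝ) ≤ -1 := by exact_mod_cast Int.le_sub_one_of_lt h
    rw [max_eq_right (by linarith), max_eq_right (by linarith), max_eq_right (by linarith),
      if_neg (by omega)]
    ring
  · simp
  · have : (1 : ℝ) ≤ n := by exact_mod_cast h
    rw [max_eq_left (by linarith), max_eq_left (by linarith), max_eq_left (by linarith),
      if_neg (by omega)]
    ring

/-- A beam bends only at its load and at its supports. -/
theorem moment_second_difference {s t k : ℤ} {o : Obj G y} (hgap : F.Gap t k) :
    F.moment s o (t + 1) k + F.moment s o (t - 1) k - 2 * F.moment s o t k =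
      (if s = t ∧ F.hi o ≤ k then 1 else 0) -
        o.abscissa s (fun v => if y v = t ∧ F.right v ≤ k then 1 else 0) := by
  have support_iff : ∀ v, o.bot = v ∨ o.top = v →
      ((y v = t ∧ F.right v ≤ k) ↔ (y v = t ∧ F.hi o ≤ k)) :=
    fun v hv => and_congr_right (hgap.right_le_iff hv)
  by_cases hk : F.hi o ≤ k
  · have ramps : (fun v => if y v = t then (1 : ℝ) else 0) =
        (fun v => max ((t + 1 : ℤ) - y v : ℝ) 0) + (fun v => max ((t - 1 : ℤ) - y v : ℝ) 0) -
          (2 : ℝ) • fun v => max (t - y v : ℝ) 0 :=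
      funext fun v => (max_zero_second_difference t (y v)).symm
    rw [Obj.abscissa_congr (X' := fun v => if y v = t then (1 : ℝ) else 0)
      fun v hv => by simp only [support_iff v hv, hk, and_true], ramps]
    simp only [moment, hk, and_true, if_true, map_sub, map_add, map_smul, smul_eq_mul]
    rw [← max_zero_second_difference t s]
    ring
  · rw [Obj.abscissa_congr (X' := 0) fun v hv => by simp [support_iff v hv, hk], map_zero]
    simp [moment, hk]

variable (F) in
/-- Two objects in the row of the vertex `base`, the first to the left of the second. -/
@[ext] structure Precedence where
  base : V
  fst : Obj G y
  snd : Obj G y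
  fst_active : fst.Active (y base)
  snd_active : snd.Active (y base)
  lt : F.hi fst < F.lo snd

instance [Finite V] : Finite (Precedence F) :=
  Finite.of_injective (fun i => (i.base, i.fst, i.snd)) fun i j h => by
    simp only [Prod.mk.injEq] at h
    exact Precedence.ext h.1 h.2.1 h.2.2

/-- The horizontal distance from the first to the second object in a straight-line drawing, as a
linear functional of the abscissae of the vertices. -/
noncomputable def Precedence.distance (i : Precedence F) : (V → ℝ) →ₗ[ℝ] ℝ :=
  i.snd.abscissa (y i.base) - i.fst.abscissa (y i.base)

/-- The total moment when each precedence `i` pushes its objects apart with force `w i`. -/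
noncomputable def totalMoment [Fintype (Precedence F)] (w : Precedence F → ℝ) (t k : ℤ) : ℝ :=
  ∑ i, w i * (F.moment (y i.base) i.snd t k - F.moment (y i.base) i.fst t k)

section Equilibrium

variable [Fintype (Precedence F)] {w : Precedence F → ℝ}

theorem totalMoment_eq_zero_of_outside {t k : ℤ} (h : ∀ o : Obj G y, t ≤ y o.bot ∨ y o.top ≤ t) :
    totalMoment w t k = 0 := by
  refine Finset.sum_eq_zero fun i _ => ?_
  rw [moment_eq_zero_of_notMem_Ioo i.fst_active (h _),
    moment_eq_zero_of_notMem_Ioo i.snd_active (h _), sub_self, mul_zero]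

theorem totalMoment_eq_zero_of_lt_hi {t k : ℤ} (h : ∀ o : Obj G y, k < F.hi o) :
    totalMoment w t k = 0 := by
  simp [totalMoment, moment, (h _).not_ge]

theorem totalMoment_eq_zero_of_hi_le (hw : ∑ i, w i • i.distance = 0) {t k : ℤ}
    (h : ∀ o : Obj G y, F.hi o ≤ k) : totalMoment w t k = 0 := by
  have := LinearMap.congr_fun hw fun v => max (t - y v : ℝ) 0
  simp only [LinearMap.sum_apply, LinearMap.smul_apply, Precedence.distance, LinearMap.sub_apply,
    smul_eq_mul, LinearMap.zero_apply] at this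
  rw [← neg_eq_zero, ← this, totalMoment, ← Finset.sum_neg_distrib]
  refine Finset.sum_congr rfl fun i _ => ?_
  simp only [moment, h, if_true]
  ring

theorem totalMoment_second_difference (hw : ∑ i, w i • i.distance = 0) {t k : ℤ}
    (hgap : F.Gap t k) :
    totalMoment w (t + 1) k + totalMoment w (t - 1) k - 2 * totalMoment w t k =
      -∑ i, w i * if y i.base = t ∧ F.hi i.fst ≤ k ∧ k < F.hi i.snd then 1 else 0 := by
  let left := fun v => if y v = t ∧ F.right v ≤ k then (1 : ℝ) else 0
  have reactions : ∑ i, w i * i.distance left = 0 := by simpa using LinearMap.congr_fun hw left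
  have load_eq : ∀ i : Precedence F,
      ((if y i.base = t ∧ F.hi i.fst ≤ k ∧ k < F.hi i.snd then 1 else 0 : ℝ)) =
        (if y i.base = t ∧ F.hi i.fst ≤ k then 1 else 0) -
          if y i.base = t ∧ F.hi i.snd ≤ k then 1 else 0 := fun i => by
    have := i.lt.trans_le (F.lo_le_hi i.snd)
    split_ifs <;> first | omega | norm_num
  calc
    _ = ∑ i, (-(w i * if y i.base = t ∧ F.hi i.fst ≤ k ∧ k < F.hi i.snd then 1 else 0) -
          w i * i.distance left) := by
      simp only [totalMoment, Finset.mul_sum, ← Finset.sum_add_distrib, ← Finset.sum_sub_distrib]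
      refine Finset.sum_congr rfl fun i _ => ?_
      rw [load_eq, Precedence.distance, LinearMap.sub_apply]
      linear_combination w i * moment_second_difference (s := y i.base) (o := i.snd) hgap -
        w i * moment_second_difference (s := y i.base) (o := i.fst) hgap
    _ = _ := by rw [Finset.sum_sub_distrib, reactions, sub_zero, Finset.sum_neg_distrib]

theorem totalMoment_isPotential [Finite V] (hw : ∑ i, w i • i.distance = 0) (hnonneg : 0 ≤ w) :
    F.IsPotential (totalMoment w) where
  concave {t k} hgap := by
    rw [← sub_nonpos, totalMoment_second_difference hw hgap, neg_nonpos]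
    exact Finset.sum_nonneg fun i _ => mul_nonneg (hnonneg i) (by split_ifs <;> norm_num)
  jump {t k} hne := by
    by_contra! hno
    refine hne (Finset.sum_congr rfl fun i _ => ?_)
    rw [not_ne_iff.mp fun h => (exists_crosses_of_moment_ne i.snd_active h).elim (by grind),
      not_ne_iff.mp fun h => (exists_crosses_of_moment_ne i.fst_active h).elim (by grind)]
  vanishes := by
    obtain ⟨K, hK⟩ := ((finite_range fun v => |y v|).union
      (finite_range fun o : Obj G y => |F.hi o|)).bddAbove
    have row_le : ∀ v, |y v| ≤ K := fun v => hK (.inl ⟨v, rfl⟩)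
    have hi_le : ∀ o : Obj G y, |F.hi o| ≤ K := fun o => hK (.inr ⟨o, rfl⟩)
    refine ⟨K, fun t k h => ?_⟩
    rcases h with h | h
    · refine totalMoment_eq_zero_of_outside fun o => ?_
      grind
    · rcases lt_abs.mp h with h | h
      · exact totalMoment_eq_zero_of_hi_le hw fun o => ((le_abs_self _).trans (hi_le o)).trans h.le
      · exact totalMoment_eq_zero_of_lt_hi fun o => by
          linarith [neg_le_of_abs_le (hi_le o)]

theorem weight_eq_zero [Finite V] (hF : F.Noncrossing) (hw : ∑ i, w i • i.distance = 0)
    (hnonneg : 0 ≤ w) : w = 0 := by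
  funext i
  have hΦ := (totalMoment_isPotential hw hnonneg).eq_zero hF
  have hgap : F.Gap (y i.base) (F.hi i.fst) := hF.gap_hi i.fst_active
  have loads := totalMoment_second_difference hw hgap
  simp only [hΦ, add_zero, mul_zero, sub_zero, zero_eq_neg] at loads
  have := (Finset.sum_eq_zero_iff_of_nonneg fun j _ =>
    mul_nonneg (hnonneg j) (by split_ifs <;> norm_num)).mp loads i (Finset.mem_univ i)
  simpa [i.lt.trans_le (F.lo_le_hi i.snd)] using this

end Equilibrium

theorem Noncrossing.exists_int_abscissae [Finite V] (hF : F.Noncrossing) :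
    ∃ X : V → ℤ, ∀ i : Precedence F, 0 < i.distance fun v => X v := by
  cases nonempty_fintype (Precedence F)
  have hne : {X | ∀ i : Precedence F, 0 < i.distance X}.Nonempty := by
    refine (exists_forall_pos_or_exists_nonneg_combination_eq_zero
      (Precedence.distance (F := F))).resolve_right ?_
    rintro ⟨w, hnonneg, hne, hw⟩
    exact hne (weight_eq_zero hF hw hnonneg)
  refine exists_int_mem_of_isOpen_of_smul_mem ?_ hne fun c hc X hX i => ?_
  · rw [ofPred_forall]
    exact isOpen_iInter_of_finite fun i =>
      isOpen_lt continuous_const (LinearMap.continuous_of_finiteDimensional _)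
  · rw [map_smul]
    exact mul_pos hc (hX i)

end FlatVR

section Straighten

variable {V : Type*} {G : SimpleGraph V} {y : V → ℤ} {F : FlatVR G y} {X : V → ℝ}

theorem FlatVR.hi_lt_lo_or (hF : F.toBarDrawing.RowOrdered) {t : ℝ} {o o' : Obj G y} (hne : o ≠ o')
    (ho : o.Active t) (ho' : o'.Active t) : F.hi o < F.lo o' ∨ F.hi o' < F.lo o := by
  have := hF.separated hne ho ho'
  simpa only [F.lo_toBarDrawing, F.hi_toBarDrawing, Int.cast_lt] using this

theorem FlatVR.noncrossing (hF : F.toBarDrawing.RowOrdered) : F.Noncrossing where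
  vertex_vertex hne hy := (hF.right_lt_left_or hne hy).imp Int.cast_lt.mp Int.cast_lt.mp
  edge_vertex {e v} he :=
    FlatVR.hi_lt_lo_or hF (o := .edge e) (o' := .vertex v) (by simp)
      (Obj.active_edge_iff.mpr he) rfl

/-- In the rows of its ends an edge is represented by the end. -/
theorem FlatVR.exists_active_of_mem_Icc {e : UpEdge G y} {t : ℤ}
    (ht : t ∈ Icc (y e.bot) (y e.top)) :
    ∃ o : Obj G y, o.Active (t : ℝ) ∧ o.abscissa t = (Obj.edge e).abscissa t ∧
      F.col e ∈ Icc (F.lo o) (F.hi o) ∧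
      (o = .edge e ∨ ∃ p, o = .vertex p ∧ y p = t ∧ (e.bot = p ∨ e.top = p)) := by
  have of_end : ∀ {p : V}, e.bot = p ∨ e.top = p →
      (Obj.vertex p : Obj G y).abscissa (y p) = (Obj.edge e).abscissa (y p) := fun hp =>
    LinearMap.ext fun _ => (BarDrawing.ofPoints_lo_of_eq_end (o := .edge e) hp).symm
  rcases ht.1.eq_or_lt with rfl | hbot
  · exact ⟨.vertex e.bot, rfl, of_end (.inl rfl), F.col_mem_bot e, .inr ⟨_, rfl, rfl, .inl rfl⟩⟩
  rcases ht.2.eq_or_lt with rfl | htop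
  · exact ⟨.vertex e.top, rfl, of_end (.inr rfl), F.col_mem_top e, .inr ⟨_, rfl, rfl, .inr rfl⟩⟩
  · exact ⟨.edge e, Obj.active_edge_iff.mpr ⟨hbot, htop⟩, rfl, ⟨le_rfl, le_rfl⟩, .inl rfl⟩

theorem FlatVR.abscissa_lt_or_exists_common_end (hF : F.toBarDrawing.RowOrdered)
    (hX : ∀ i : Precedence F, 0 < i.distance X) {e f : UpEdge G y} (hef : F.col e < F.col f) {v : V}
    (he : y v ∈ Icc (y e.bot) (y e.top)) (hf : y v ∈ Icc (y f.bot) (y f.top)) :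
    (Obj.edge e).abscissa (y v) X < (Obj.edge f).abscissa (y v) X ∨
      (Obj.edge e).abscissa (y v) X = (Obj.edge f).abscissa (y v) X ∧
        ∃ p, y p = y v ∧ (e.bot = p ∨ e.top = p) ∧ (f.bot = p ∨ f.top = p) := by
  obtain ⟨o, ho, ho_eq, ho_col, ho_end⟩ := FlatVR.exists_active_of_mem_Icc (F := F) he
  obtain ⟨o', ho', ho_eq', ho_col', ho_end'⟩ := FlatVR.exists_active_of_mem_Icc (F := F) hf
  rw [← ho_eq, ← ho_eq']
  by_cases hne : o = o'
  · subst hne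
    refine .inr ⟨rfl, ?_⟩
    rcases ho_end with rfl | ⟨p, rfl, hp, hep⟩ <;>
      rcases ho_end' with h | ⟨q, h, -, hfq⟩ <;> cases h
    · exact absurd hef (lt_irrefl _)
    · exact ⟨p, hp, hep, hfq⟩
  · have hlt : F.hi o < F.lo o' := (FlatVR.hi_lt_lo_or hF hne ho ho').resolve_right fun h =>
      (hef.trans_le (ho_col'.2.trans (h.le.trans ho_col.1))).false
    exact .inl (sub_pos.mp (hX ⟨v, o, o', ho, ho', hlt⟩))

theorem UpEdge.lineAt_lt_lineAt {e f : UpEdge G y} {p q p' q' a b t : ℝ} (hat : a < t) (htb : t < b)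
    (ha : e.lineAt p q a ≤ f.lineAt p' q' a) (hb : e.lineAt p q b ≤ f.lineAt p' q' b)
    (hne : e.lineAt p q a < f.lineAt p' q' a ∨ e.lineAt p q b < f.lineAt p' q' b) :
    e.lineAt p q t < f.lineAt p' q' t := by
  refine lt_of_mul_lt_mul_right ?_ (sub_pos.mpr (hat.trans htb)).le
  rw [e.lineAt_affine p q a b t, f.lineAt_affine p' q' a b t]
  have := sub_pos.mpr hat
  have := sub_pos.mpr htb
  rcases hne with hne | hne
  · exact add_lt_add_of_lt_of_le (by gcongr) (by gcongr)
  · exact add_lt_add_of_le_of_lt (by gcongr) (by gcongr)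

theorem UpEdge.eq_of_common_ends {e f : UpEdge G y} {s t : ℤ} (hst : s < t)
    (hs : ∃ p, y p = s ∧ (e.bot = p ∨ e.top = p) ∧ (f.bot = p ∨ f.top = p))
    (ht : ∃ p, y p = t ∧ (e.bot = p ∨ e.top = p) ∧ (f.bot = p ∨ f.top = p)) : e = f := by
  have := e.lt
  have := f.lt
  exact UpEdge.ext (by grind) (by grind)

theorem FlatVR.edgeX_lt (hF : F.toBarDrawing.RowOrdered)
    (hX : ∀ i : Precedence F, 0 < i.distance X) {e f : UpEdge G y} (hef : F.col e < F.col f) {t : ℝ}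
    (he : (Obj.edge e).Active t) (hf : (Obj.edge f).Active t) :
    (BarDrawing.ofPoints G y X).edgeX e t < (BarDrawing.ofPoints G y X).edgeX f t := by
  obtain ⟨a, hat, hea, hfa⟩ : ∃ a, (y a : ℝ) < t ∧ y e.bot ≤ y a ∧ y f.bot ≤ y a :=
    (le_total (y e.bot) (y f.bot)).elim (fun h => ⟨_, hf.1, h, le_rfl⟩)
      fun h => ⟨_, he.1, le_rfl, h⟩
  obtain ⟨b, htb, heb, hfb⟩ : ∃ b, t < y b ∧ y b ≤ y e.top ∧ y b ≤ y f.top :=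
    (le_total (y e.top) (y f.top)).elim (fun h => ⟨_, he.2, le_rfl, h⟩)
      fun h => ⟨_, hf.2, h, le_rfl⟩
  have hab : y a < y b := Int.cast_lt.mp (hat.trans htb)
  have at_a := FlatVR.abscissa_lt_or_exists_common_end hF hX hef (v := a)
    ⟨hea, hab.le.trans heb⟩ ⟨hfa, hab.le.trans hfb⟩
  have at_b := FlatVR.abscissa_lt_or_exists_common_end hF hX hef (v := b)
    ⟨hea.trans hab.le, heb⟩ ⟨hfa.trans hab.le, hfb⟩
  refine UpEdge.lineAt_lt_lineAt hat htb (at_a.elim le_of_lt fun h => h.1.le)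
    (at_b.elim le_of_lt fun h => h.1.le) ?_
  exact at_a.imp_right fun ha => at_b.resolve_right fun hb =>
    hef.ne (congrArg F.col (UpEdge.eq_of_common_ends hab ha.2 hb.2))

theorem FlatVR.ofPoints_isPlanar (hF : F.toBarDrawing.RowOrdered)
    (hX : ∀ i : Precedence F, 0 < i.distance X) : (BarDrawing.ofPoints G y X).IsPlanar := by
  refine BarDrawing.isPlanar_iff_rowOrdered.mpr
    (hF.of_order_preserving (fun _ _ _ => ⟨rfl, rfl⟩) fun {t o o'} ho ho' hlt => ?_)
  rw [F.hi_toBarDrawing, F.lo_toBarDrawing, Int.cast_lt] at hlt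
  have of_row : ∀ v, (y v : ℝ) = t → (BarDrawing.ofPoints G y X).hi t o <
      (BarDrawing.ofPoints G y X).lo t o' := by
    rintro v rfl
    rw [BarDrawing.ofPoints_hi]
    exact sub_pos.mp (hX ⟨v, o, o', ho, ho', hlt⟩)
  cases o with
  | vertex v => exact of_row v ho
  | edge e =>
    cases o' with
    | vertex v => exact of_row v ho'
    | edge f => exact FlatVR.edgeX_lt hF hX hlt ho ho'

theorem exists_ofPoints_isPlanar_iff_exists_flatVR [Finite V] :
    (∃ X : V → ℤ, (BarDrawing.ofPoints G y fun v => X v).IsPlanar) ↔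
      ∃ F : FlatVR G y, F.toBarDrawing.IsPlanar := by
  constructor
  · rintro ⟨X, hX⟩
    exact exists_flatVR_isPlanar_of_ofPoints hX
  · rintro ⟨F, hF⟩
    obtain ⟨X, hX⟩ := (FlatVR.noncrossing hF.rowOrdered).exists_int_abscissae
    exact ⟨X, FlatVR.ofPoints_isPlanar hF.rowOrdered hX⟩

end Straighten

theorem straightLine_height_iff_flatVR_height_general {V : Type*} [Finite V] (G : SimpleGraph V)
    (h : ℕ) :
    (∃ D : PolylineDrawing G, D.IsStraightLine ∧ D.IsPlanar ∧ D.IntCoords ∧ D.InHeight h) ↔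
      ∃ D : OrthDrawing G, D.IsPlanar ∧ D.IsFlat ∧ D.IsVR ∧ D.IntCoords ∧ D.InHeight h := by
  rw [exists_straightLine_iff, exists_flatVR_iff]
  simp only [exists_ofPoints_isPlanar_iff_exists_flatVR]

/-- A finite simple planar graph has a planar straight-line drawing
of height `h` if and only if it has a planar flat visibility representation of
height `h`. -/
theorem straightLine_height_iff_flatVR_height {V : Type} [Fintype V]
    (G : SimpleGraph V) (hplanar : HasPlanarEmbedding G) (h : ℕ) (hh : 0 < h) :
    (∃ D : PolylineDrawing G, D.IsStraightLine ∧ D.IsPlanar ∧ D.IntCoords ∧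
      D.InHeight h) ↔
    (∃ D : OrthDrawing G, D.IsPlanar ∧ D.IsFlat ∧ D.IsVR ∧ D.IntCoords ∧
      D.InHeight h) :=
  straightLine_height_iff_flatVR_height_general G h
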